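/- arXiv:1807.00928 — 2 statements merged into one kernel-verified Lean document; each statement's English description precedes it below -/
import Mathlib

section
/- For every n ≥ 1, every R > 0 and every ρ with R/2 ≤ ρ < e^{-1/2} R, there exists a constant C > 0, depending only on R, ρ and n, such that for every smooth plurisubharmonic function ψ on the open ball B_R(0) ⊆ ℂⁿ satisfying ψ(0) ≥ -1 and ψ ≤ 0 on B_R(0), one has ∫_{B_ρ(0)} e^{-ψ} dV ≤ C. -/
open MeasureTheory

/-- The Laplacian `Δf = ∂²f/∂x² + ∂²f/∂y²` of a function `f : ℂ → ℝ`, expressed via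
iterated directional (Fréchet) derivatives in the directions `1` and `i`. -/
noncomputable def laplacian (f : ℂ → ℝ) (z : ℂ) : ℝ :=
  fderiv ℝ (fun w => fderiv ℝ f w 1) z 1 +
    fderiv ℝ (fun w => fderiv ℝ f w Complex.I) z Complex.I

/- Lebesgue measure on `ℂⁿ = EuclideanSpace ℂ (Fin n)` (the Haar measure normalized so that
an orthonormal real basis spans a parallelepiped of volume one, i.e. Lebesgue measure
on `ℝ^{2n}`), obtained from the real inner product space structure. -/
noncomputable instance (n : ℕ) : MeasurableSpace (EuclideanSpace ℂ (Fin n)) :=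
  MeasurableSpace.comap (WithLp.ofLp (p := 2)) MeasurableSpace.pi

instance (n : ℕ) : BorelSpace (EuclideanSpace ℂ (Fin n)) := PiLp.borelSpace 2

open Set Filter Topology

/-- the unit vector -/
noncomputable def eU (θ : ℝ) : ℂ := (Real.cos θ : ℂ) + (Real.sin θ : ℂ) * Complex.I

lemma eU_cont : Continuous eU := by unfold eU; fun_prop

lemma eU_norm (θ : ℝ) : ‖eU θ‖ = 1 := by
  have := Complex.norm_exp_ofReal_mul_I θ
  rwa [Complex.exp_mul_I, ← Complex.ofReal_cos, ← Complex.ofReal_sin] at this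

lemma eU_deriv (θ : ℝ) : HasDerivAt eU (Complex.I * eU θ) θ := by
  have h1 := (Real.hasDerivAt_cos θ).ofReal_comp
  have h2 := ((Real.hasDerivAt_sin θ).ofReal_comp).mul_const Complex.I
  have h3 := h1.add h2
  refine h3.congr_deriv ?_
  simp only [eU]
  push_cast
  ring_nf
  rw [Complex.I_sq]
  ring

lemma eU_pi : eU (-Real.pi) = eU Real.pi := by
  simp [eU]


lemma cd1 {u : ℂ → ℝ} (hu : ContDiff ℝ (⊤ : ℕ∞) u)
    : ContDiff ℝ (⊤ : ℕ∞) (fderiv ℝ u) := by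
  apply hu.fderiv_right
  norm_cast

lemma cd2 {u : ℂ → ℝ} (hu : ContDiff ℝ (⊤ : ℕ∞) u)
    : ContDiff ℝ (⊤ : ℕ∞) (fderiv ℝ (fderiv ℝ u)) := cd1 (u := u) hu |>.fderiv_right (by norm_cast)

lemma lap_eq {u : ℂ → ℝ} (hu : ContDiff ℝ (⊤ : ℕ∞) u)
    (z : ℂ) : laplacian u z = fderiv ℝ (fderiv ℝ u) z 1 1 +
    fderiv ℝ (fderiv ℝ u) z Complex.I Complex.I := by
  have hd : DifferentiableAt ℝ (fderiv ℝ u) z := (cd1 hu).differentiable (by simp) z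
  have (v : ℂ) : fderiv ℝ (fun w => fderiv ℝ u w v) z v = fderiv ℝ (fderiv ℝ u) z v v := by
    have := (hd.hasFDerivAt.clm_apply (hasFDerivAt_const v z)).fderiv
    rw [this]; simp
  unfold laplacian
  rw [this, this]

lemma lap_cont {u : ℂ → ℝ} (hu : ContDiff ℝ (⊤ : ℕ∞) u)
    : Continuous (laplacian u) := by
  have h : laplacian u = fun z => fderiv ℝ (fderiv ℝ u) z 1 1 +
    fderiv ℝ (fderiv ℝ u) z Complex.I Complex.I := funext (lap_eq hu)
  rw [h]
  have := (cd2 hu).continuous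
  fun_prop

lemma trace_eq {u : ℂ → ℝ} (hu : ContDiff ℝ (⊤ : ℕ∞) u)
    (z : ℂ) (θ : ℝ) : fderiv ℝ (fderiv ℝ u) z (eU θ) (eU θ) +
    fderiv ℝ (fderiv ℝ u) z (Complex.I * eU θ) (Complex.I * eU θ) = laplacian u z := by
  rw [lap_eq hu]
  set B := fderiv ℝ (fderiv ℝ u) z
  have h1 : eU θ = (Real.cos θ) • (1:ℂ) + (Real.sin θ) • Complex.I := by
    simp [eU]
  have h2 : Complex.I * eU θ = (-Real.sin θ) • (1:ℂ) + (Real.cos θ) • Complex.I := by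
    simp only [eU, Complex.real_smul]
    push_cast
    ring_nf
    rw [Complex.I_sq]; ring
  rw [h2, h1]
  simp only [map_add, map_smul, add_apply, smul_apply, smul_eq_mul]
  have := Real.sin_sq_add_cos_sq θ
  linear_combination (B 1 1 + B Complex.I Complex.I) * this

lemma theta_zero {u : ℂ → ℝ} (hu : ContDiff ℝ (⊤ : ℕ∞) u)
    (z : ℂ) (t : ℝ) : ∫ θ in (-Real.pi)..Real.pi,
    (fderiv ℝ u (z + t * eU θ) (eU θ) -
      t * fderiv ℝ (fderiv ℝ u) (z + t * eU θ) (Complex.I * eU θ) (Complex.I * eU θ)) = 0 := by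
  have hc1 := (cd1 hu).continuous
  have hc2 := (cd2 hu).continuous
  have he := eU_cont
  rw [intervalIntegral.integral_eq_sub_of_hasDerivAt
    (f := fun θ => - fderiv ℝ u (z + t * eU θ) (Complex.I * eU θ))]
  · rw [eU_pi]; simp
  · intro θ _
    have hd : DifferentiableAt ℝ (fderiv ℝ u) (z + t * eU θ) :=
      (cd1 hu).differentiable (by simp) _
    have h1 : HasDerivAt (fun θ => z + t * eU θ) (t * (Complex.I * eU θ)) θ :=
      ((eU_deriv θ).const_mul (t:ℂ)).const_add z
    have h2 := hd.hasFDerivAt.comp_hasDerivAt θ h1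
    have h3 := (h2.clm_apply ((eU_deriv θ).const_mul Complex.I)).neg
    refine h3.congr_deriv ?_
    have e1 : Complex.I * (Complex.I * eU θ) = - eU θ := by
      rw [← mul_assoc, Complex.I_mul_I]; ring
    have e2 : (t:ℂ) * (Complex.I * eU θ) = t • (Complex.I * eU θ) := by simp
    rw [e1, e2]
    simp only [map_smul, smul_apply, map_neg, smul_eq_mul, Function.comp]
    ring
  · apply Continuous.intervalIntegrable
    fun_prop

lemma radial {u : ℂ → ℝ} (hu : ContDiff ℝ (⊤ : ℕ∞) u)
    (z : ℂ) (θ : ℝ) {s : ℝ} (hs : 0 < s) : ∫ t in (0:ℝ)..s, (Real.log s - Real.log t) *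
    (fderiv ℝ u (z + t * eU θ) (eU θ) +
      t * fderiv ℝ (fderiv ℝ u) (z + t * eU θ) (eU θ) (eU θ)) = u (z + s * eU θ) - u z := by
  have hc1 := (cd1 hu).continuous
  have hc2 := (cd2 hu).continuous
  have hc0 := hu.continuous
  rw [intervalIntegral.integral_eq_sub_of_hasDerivAt_of_le
    (f := fun t => (t * Real.log s - t * Real.log t) * fderiv ℝ u (z + t * eU θ) (eU θ)
      + u (z + t * eU θ)) hs.le]
  · simp
  · have := Real.continuous_mul_log
    apply Continuous.continuousOn
    fun_prop
  · intro t ht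
    have ht0 : t ≠ 0 := ht.1.ne'
    have hd : DifferentiableAt ℝ (fderiv ℝ u) (z + t * eU θ) :=
      (cd1 hu).differentiable (by simp) _
    have hd0 : DifferentiableAt ℝ u (z + t * eU θ) :=
      hu.differentiable (by simp) _
    have h1 : HasDerivAt (fun t : ℝ => z + t * eU θ) (eU θ) t := by
      have := ((hasDerivAt_id t).ofReal_comp.mul_const (eU θ)).const_add z
      simpa using this
    have h2 := hd.hasFDerivAt.comp_hasDerivAt t h1
    have h3 := (h2.clm_apply (hasDerivAt_const t (eU θ)))
    have h4 := hd0.hasFDerivAt.comp_hasDerivAt t h1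
    have h5 := ((hasDerivAt_id t).mul_const (Real.log s)).sub (Real.hasDerivAt_mul_log ht0)
    have h6 := (h5.mul h3).add h4
    refine h6.congr_deriv ?_
    simp
    ring
  · apply IntervalIntegrable.mul_continuousOn
    · exact intervalIntegrable_const.sub intervalIntegral.intervalIntegrable_log'
    · apply Continuous.continuousOn; fun_prop

lemma jensen_polar {u : ℂ → ℝ} (hu : ContDiff ℝ (⊤ : ℕ∞) u)
    (z : ℂ) {s : ℝ} (hs : 0 < s) :
    (∫ θ in (-Real.pi)..Real.pi, u (z + s * eU θ)) - 2 * Real.pi * u z =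
    ∫ t in (0:ℝ)..s, ∫ θ in (-Real.pi)..Real.pi,
      t * (Real.log s - Real.log t) * laplacian u (z + t * eU θ) := by
  have hc1 := (cd1 hu).continuous
  have hc2 := (cd2 hu).continuous
  have hc0 := hu.continuous
  have hl := lap_cont hu
  have he := eU_cont
  have hml := Real.continuous_mul_log
  have A : (∫ θ in (-Real.pi)..Real.pi, u (z + s * eU θ)) - 2 * Real.pi * u z =
      ∫ θ in (-Real.pi)..Real.pi, (u (z + s * eU θ) - u z) := by
    rw [intervalIntegral.integral_sub (Continuous.intervalIntegrable (by fun_prop) _ _)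
      intervalIntegrable_const]
    rw [intervalIntegral.integral_const, smul_eq_mul]; ring
  rw [A]
  simp_rw [← radial hu z _ hs]
  have hG : Continuous (fun p : ℝ × ℝ => fderiv ℝ u (z + p.2 * eU p.1) (eU p.1) +
      p.2 * fderiv ℝ (fderiv ℝ u) (z + p.2 * eU p.1) (eU p.1) (eU p.1)) := by fun_prop
  have hlogint : IntegrableOn (fun p : ℝ × ℝ => Real.log s - Real.log p.2)
      (Icc (-Real.pi) Real.pi ×ˢ Icc 0 s) := by
    have h1 : IntegrableOn (fun t => Real.log s - Real.log t) (Icc 0 s) := by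
      have := (intervalIntegrable_const (c := Real.log s) (μ := volume) (a := 0) (b := s)).sub
        intervalIntegral.intervalIntegrable_log'
      exact (intervalIntegrable_iff_integrableOn_Icc_of_le hs.le).1 this
    have h2 : IntegrableOn (fun _ : ℝ => (1:ℝ)) (Icc (-Real.pi) Real.pi) := by simp
    have := Integrable.mul_prod h2 h1
    rw [Measure.prod_restrict] at this
    rw [← Measure.volume_eq_prod] at this
    simp only [one_mul] at this
    exact this
  have hlogint2 := hlogint.mul_continuousOn hG.continuousOn (isCompact_Icc.prod isCompact_Icc)
  rw [intervalIntegral_intervalIntegral_swap]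
  · apply intervalIntegral.integral_congr
    intro t _
    have h0 := theta_zero hu z t
    have : ∀ θ, (Real.log s - Real.log t) * (fderiv ℝ u (z + t * eU θ) (eU θ) +
      t * fderiv ℝ (fderiv ℝ u) (z + t * eU θ) (eU θ) (eU θ)) =
      t * (Real.log s - Real.log t) * laplacian u (z + t * eU θ) +
      (Real.log s - Real.log t) * (fderiv ℝ u (z + t * eU θ) (eU θ) -
      t * fderiv ℝ (fderiv ℝ u) (z + t * eU θ) (Complex.I * eU θ) (Complex.I * eU θ)) := by
      intro θ
      rw [← trace_eq hu _ θ]; ring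
    simp only [this]
    rw [intervalIntegral.integral_add, intervalIntegral.integral_const_mul (Real.log s - Real.log t), h0]
    · simp
    · apply Continuous.intervalIntegrable; fun_prop
    · apply Continuous.intervalIntegrable; fun_prop
  · rw [uIoc_of_le (by linarith [Real.pi_pos]), uIoc_of_le hs.le]
    exact hlogint2.mono_set (prod_mono Ioc_subset_Icc_self Ioc_subset_Icc_self)



lemma polar_ball (f : ℂ → ℝ) (hf : Continuous (fun p : ℝ × ℝ => p.1 * f (p.1 * eU p.2)))
    {s : ℝ} (hs : 0 < s) :
    ∫ ζ in Metric.ball (0:ℂ) s, f ζ =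
      ∫ t in (0:ℝ)..s, ∫ θ in (-Real.pi)..Real.pi, t * f (t * eU θ) := by
  have h1 : ∫ ζ in Metric.ball (0:ℂ) s, f ζ = ∫ p in Ioo 0 s ×ˢ Ioo (-Real.pi) Real.pi,
      p.1 * f (p.1 * eU p.2) := by
    rw [← MeasureTheory.integral_indicator measurableSet_ball, ← Complex.integral_comp_polarCoord_symm,
      ← MeasureTheory.integral_indicator (measurableSet_Ioo.prod measurableSet_Ioo),
      ← MeasureTheory.integral_indicator polarCoord.open_target.measurableSet]
    congr 1
    ext p
    have hn : ‖(p.1:ℂ) * eU p.2‖ = |p.1| := by rw [norm_mul, eU_norm]; simp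
    simp only [indicator, polarCoord_target, Complex.polarCoord_symm_apply, mem_prod, mem_Ioi, mem_Ioo,
      Metric.mem_ball, dist_zero_right]
    change (if 0 < p.1 ∧ _ then p.1 • (if ‖(p.1:ℂ) * eU p.2‖ < s then f (p.1 * eU p.2) else 0) else 0) = _
    rw [hn]
    by_cases hp : 0 < p.1
    · rw [abs_of_pos hp]
      by_cases h2 : p.1 < s <;> simp [hp, h2]
    · simp [hp]
  rw [h1, Measure.volume_eq_prod, setIntegral_prod, intervalIntegral.integral_of_le hs.le,
    integral_Ioc_eq_integral_Ioo]
  · simp_rw [intervalIntegral.integral_of_le (show -Real.pi ≤ Real.pi by linarith [Real.pi_pos]),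
      integral_Ioc_eq_integral_Ioo]
  · exact (hf.continuousOn.integrableOn_compact (isCompact_Icc.prod isCompact_Icc)).mono_set
      (prod_mono Ioo_subset_Icc_self Ioo_subset_Icc_self)

/-- circle integral -/
noncomputable def cM (u : ℂ → ℝ) (z : ℂ) (s : ℝ) : ℝ := ∫ θ in (-Real.pi)..Real.pi, u (z + s * eU θ)

lemma logker_int (s A : ℝ) :
    IntegrableOn (fun ζ : ℂ => Real.log s - Real.log ‖ζ‖) (Metric.ball 0 A) := by
  rw [integrableOn_fun_norm_addHaar (μ := (volume : Measure ℂ)) (f := fun t => Real.log s - Real.log t)]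
  rw [Complex.finrank_real_complex]
  have : Continuous (fun y : ℝ => y ^ (2-1) • (Real.log s - Real.log y)) := by
    have := Real.continuous_mul_log
    have e : (fun y : ℝ => y ^ (2-1) • (Real.log s - Real.log y)) =
      fun y => y * Real.log s - y * Real.log y := by ext y; simp; ring
    rw [e]; fun_prop
  exact (this.continuousOn.integrableOn_compact isCompact_Icc).mono_set Ioo_subset_Icc_self

lemma logker_mul_int {g : ℂ → ℝ} (hg : Continuous g) (s A : ℝ) (_hA : 0 < A) :
    IntegrableOn (fun ζ : ℂ => (Real.log s - Real.log ‖ζ‖) * g ζ) (Metric.ball 0 A) := by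
  have h := (logker_int s (A+1)).mono_set
    (Metric.closedBall_subset_ball (x := (0:ℂ)) (show A < A + 1 by linarith))
  exact (h.mul_continuousOn hg.continuousOn (isCompact_closedBall _ _)).mono_set
    Metric.ball_subset_closedBall

lemma expker_int {m : ℝ} (hm : m < 2) {s : ℝ} (hs : 0 < s) (A : ℝ) :
    IntegrableOn (fun ζ : ℂ => Real.exp (m * max 0 (Real.log s - Real.log ‖ζ‖))) (Metric.ball 0 A) := by
  rw [integrableOn_fun_norm_addHaar (μ := (volume : Measure ℂ))
    (f := fun t => Real.exp (m * max 0 (Real.log s - Real.log t)))]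
  rw [Complex.finrank_real_complex]
  rcases le_or_gt A 0 with hA | hA
  · rw [Ioo_eq_empty (by linarith)]; simp
  have hI : IntegrableOn (fun y : ℝ => y + s ^ m * y ^ (1 - m)) (Ioo 0 A) := by
    have h1 : IntervalIntegrable (fun y : ℝ => y ^ (1 - m)) volume 0 A :=
      intervalIntegral.intervalIntegrable_rpow' (by linarith)
    have h2 : IntervalIntegrable (fun y : ℝ => y) volume 0 A := continuous_id.intervalIntegrable _ _
    have := h2.add (h1.const_mul (s ^ m))
    exact (intervalIntegrable_iff_integrableOn_Ioo_of_le hA.le).1 this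
  refine Integrable.mono' hI ?_ ?_
  · apply Measurable.aestronglyMeasurable
    have := Real.measurable_log
    fun_prop
  · refine (ae_restrict_iff' measurableSet_Ioo).2 (Eventually.of_forall fun y hy => ?_)
    have hy0 : 0 < y := hy.1
    have hb : Real.exp (m * max 0 (Real.log s - Real.log y)) ≤ 1 + s ^ m * y ^ (-m) := by
      have hp : 0 < s ^ m * y ^ (-m) := by positivity
      rcases le_total 0 (Real.log s - Real.log y) with h | h
      · rw [max_eq_right h, Real.rpow_def_of_pos hs, Real.rpow_def_of_pos hy0, ← Real.exp_add]
        have : m * (Real.log s - Real.log y) = Real.log s * m + Real.log y * -m := by ring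
        rw [this]; linarith
      · rw [max_eq_left h]; simp; linarith
    have e : y ^ (1 - m) = y * y ^ (-m) := by
      rw [sub_eq_add_neg, Real.rpow_add hy0, Real.rpow_one]
    rw [e, Real.norm_eq_abs, abs_of_nonneg (by positivity)]
    simp only [smul_eq_mul]
    norm_num
    nlinarith


lemma cM_cont {u : ℂ → ℝ} (hu : ContDiff ℝ (⊤ : ℕ∞) u)
    (z : ℂ) : Continuous (cM u z) := by
  unfold cM
  have := hu.continuous
  have := eU_cont
  apply intervalIntegral.continuous_parametric_intervalIntegral_of_continuous'
  fun_prop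

lemma jensen_area {u : ℂ → ℝ} (hu : ContDiff ℝ (⊤ : ℕ∞) u)
    (z : ℂ) {s : ℝ} (hs : 0 < s) :
    cM u z s - 2 * Real.pi * u z =
    ∫ ζ in Metric.ball (0:ℂ) s, (Real.log s - Real.log ‖ζ‖) * laplacian u (z + ζ) := by
  have hl := lap_cont hu
  have he := eU_cont
  have hml := Real.continuous_mul_log
  have hn (a b : ℝ) : Real.log ‖(a:ℂ) * eU b‖ = Real.log a := by
    rw [norm_mul, eU_norm]; simp
  rw [polar_ball _ _ hs]
  · unfold cM
    rw [jensen_polar hu z hs]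
    simp_rw [hn, mul_assoc]
  · simp_rw [hn]
    have e : (fun p : ℝ × ℝ => p.1 * ((Real.log s - Real.log p.1) * laplacian u (z + p.1 * eU p.2))) =
      fun p : ℝ × ℝ => (p.1 * Real.log s - p.1 * Real.log p.1) * laplacian u (z + p.1 * eU p.2) := by
      ext p; ring
    rw [e]
    have : Continuous fun p : ℝ × ℝ => p.1 * Real.log p.1 := hml.comp continuous_fst
    fun_prop

lemma area_mean {u : ℂ → ℝ} (hu : ContDiff ℝ (⊤ : ℕ∞) u)
    (z : ℂ) {s : ℝ} (hs : 0 < s) :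
    ∫ ζ in Metric.ball (0:ℂ) s, u (z + ζ) = ∫ t in (0:ℝ)..s, t * cM u z t := by
  have hc := hu.continuous
  have he := eU_cont
  rw [polar_ball _ (by fun_prop) hs]
  unfold cM
  simp_rw [intervalIntegral.integral_const_mul]

lemma cM_mono {u : ℂ → ℝ} (hu : ContDiff ℝ (⊤ : ℕ∞) u)
    (z : ℂ) {s s' : ℝ} (hs : 0 < s) (hss : s ≤ s')
    (hl : ∀ ζ ∈ Metric.ball (0:ℂ) s', 0 ≤ laplacian u (z + ζ)) : cM u z s ≤ cM u z s' := by
  have h1 := jensen_area hu z hs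
  have h2 := jensen_area hu z (hs.trans_le hss)
  have hg : Continuous fun ζ => laplacian u (z + ζ) := (lap_cont hu).comp (by fun_prop)
  have hs' := hs.trans_le hss
  have : ∫ ζ in Metric.ball (0:ℂ) s, (Real.log s - Real.log ‖ζ‖) * laplacian u (z + ζ) ≤
      ∫ ζ in Metric.ball (0:ℂ) s', (Real.log s' - Real.log ‖ζ‖) * laplacian u (z + ζ) := by
    calc _ ≤ ∫ ζ in Metric.ball (0:ℂ) s, (Real.log s' - Real.log ‖ζ‖) * laplacian u (z + ζ) := by
          apply setIntegral_mono_on (logker_mul_int hg _ _ hs) (logker_mul_int hg _ _ hs)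
            measurableSet_ball
          intro ζ hζ
          apply mul_le_mul_of_nonneg_right _ (hl ζ (Metric.ball_subset_ball hss hζ))
          linarith [Real.log_le_log hs hss]
      _ ≤ _ := by
          apply setIntegral_mono_set (logker_mul_int hg _ _ hs')
          · have h0 : ∀ᵐ ζ : ℂ, ζ ≠ 0 := by
              simp [ae_iff]
            refine (ae_restrict_iff' measurableSet_ball).2 ?_
            filter_upwards [h0] with ζ h0 hζ
            apply mul_nonneg _ (hl ζ hζ)
            have : ‖ζ‖ < s' := by simpa using hζ
            linarith [Real.log_le_log (norm_pos_iff.2 h0) this.le]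
          · exact (Metric.ball_subset_ball hss).eventuallyLE
  linarith

lemma cM_ge {u : ℂ → ℝ} (hu : ContDiff ℝ (⊤ : ℕ∞) u)
    (z : ℂ) {s : ℝ} (hs : 0 < s)
    (hl : ∀ ζ ∈ Metric.ball (0:ℂ) s, 0 ≤ laplacian u (z + ζ)) : 2 * Real.pi * u z ≤ cM u z s := by
  have h1 := jensen_area hu z hs
  have : 0 ≤ ∫ ζ in Metric.ball (0:ℂ) s, (Real.log s - Real.log ‖ζ‖) * laplacian u (z + ζ) := by
    apply setIntegral_nonneg_ae measurableSet_ball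
    have h0 : ∀ᵐ ζ : ℂ, ζ ≠ 0 := by
      simp [ae_iff]
    filter_upwards [h0] with ζ h0 hζ
    apply mul_nonneg _ (hl ζ hζ)
    have : ‖ζ‖ < s := by simpa using hζ
    linarith [Real.log_le_log (norm_pos_iff.2 h0) this.le]
  linarith

/-- mass bound -/
lemma mass_bound {u : ℂ → ℝ} (hu : ContDiff ℝ (⊤ : ℕ∞) u)
    {R ρ : ℝ} (hρ : 0 < ρ) (hR : ρ < R)
    (hl : ∀ ζ ∈ Metric.ball (0:ℂ) R, 0 ≤ laplacian u ζ) (h0 : -1 ≤ u 0)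
    (hneg : ∀ ζ ∈ Metric.closedBall (0:ℂ) R, u ζ ≤ 0) :
    (Real.log R - Real.log ρ) * ∫ ζ in Metric.ball (0:ℂ) ρ, laplacian u ζ ≤ 2 * Real.pi := by
  have hR0 := hρ.trans hR
  have h1 := jensen_area hu 0 hR0
  simp only [zero_add] at h1
  have hc := lap_cont hu
  have hM : cM u 0 R ≤ 0 := by
    unfold cM
    rw [← neg_nonneg, ← intervalIntegral.integral_neg]
    apply intervalIntegral.integral_nonneg (by linarith [Real.pi_pos])
    intro θ _
    rw [neg_nonneg]
    apply hneg
    simp [eU_norm, abs_of_pos hR0]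
  have hae : ∀ᵐ ζ : ℂ, ζ ≠ 0 := by simp [ae_iff]
  have : (Real.log R - Real.log ρ) * ∫ ζ in Metric.ball (0:ℂ) ρ, laplacian u ζ ≤
      ∫ ζ in Metric.ball (0:ℂ) R, (Real.log R - Real.log ‖ζ‖) * laplacian u ζ := by
    rw [← integral_const_mul]
    calc _ ≤ ∫ ζ in Metric.ball (0:ℂ) ρ, (Real.log R - Real.log ‖ζ‖) * laplacian u ζ := by
          apply setIntegral_mono_on_ae _ (logker_mul_int hc _ _ hρ) measurableSet_ball
          · filter_upwards [hae] with ζ h0 hζ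
            apply mul_le_mul_of_nonneg_right _ (hl ζ (Metric.ball_subset_ball hR.le hζ))
            have : ‖ζ‖ < ρ := by simpa using hζ
            linarith [Real.log_le_log (norm_pos_iff.2 h0) this.le]
          · have : Continuous fun ζ => (Real.log R - Real.log ρ) * laplacian u ζ := by fun_prop
            exact (this.continuousOn.integrableOn_compact (isCompact_closedBall 0 ρ)).mono_set
              Metric.ball_subset_closedBall
      _ ≤ _ := by
          apply setIntegral_mono_set (logker_mul_int hc _ _ hR0)
          · refine (ae_restrict_iff' measurableSet_ball).2 ?_
            filter_upwards [hae] with ζ h0 hζ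
            apply mul_nonneg _ (hl ζ hζ)
            have : ‖ζ‖ < R := by simpa using hζ
            linarith [Real.log_le_log (norm_pos_iff.2 h0) this.le]
          · exact (Metric.ball_subset_ball hR.le).eventuallyLE
  nlinarith [Real.pi_pos]

lemma l1_bound {u : ℂ → ℝ} (hu : ContDiff ℝ (⊤ : ℕ∞) u)
    {R : ℝ} (hR : 0 < R)
    (hl : ∀ ζ ∈ Metric.ball (0:ℂ) R, 0 ≤ laplacian u ζ) (h0 : -1 ≤ u 0) :
    -(Real.pi * R ^ 2) ≤ ∫ ζ in Metric.ball (0:ℂ) R, u ζ := by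
  have h1 := area_mean hu 0 hR
  simp only [zero_add] at h1
  rw [h1]
  have hc := cM_cont hu 0
  have : ∫ t in (0:ℝ)..R, t * (- (2 * Real.pi)) ≤ ∫ t in (0:ℝ)..R, t * cM u 0 t := by
    apply intervalIntegral.integral_mono_on hR.le
    · apply Continuous.intervalIntegrable; fun_prop
    · apply Continuous.intervalIntegrable; fun_prop
    · intro t ht
      rcases ht.1.eq_or_lt with h | h
      · simp [← h]
      · apply mul_le_mul_of_nonneg_left _ h.le
        have := cM_ge hu 0 h (fun ζ hζ => by
          rw [zero_add]; exact hl ζ (Metric.ball_subset_ball ht.2 hζ))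
        nlinarith [Real.pi_pos]
  refine le_trans (le_of_eq ?_) this
  rw [intervalIntegral.integral_mul_const, integral_id]
  ring

/-- pointwise lower bound -/
lemma ptwise {u : ℂ → ℝ} (hu : ContDiff ℝ (⊤ : ℕ∞) u)
    {R s : ℝ} (hs : 0 < s) (z : ℂ) (hz : ‖z‖ + s ≤ R)
    (hl : ∀ ζ ∈ Metric.ball (0:ℂ) R, 0 ≤ laplacian u ζ) (h0 : -1 ≤ u 0)
    (hneg : ∀ ζ ∈ Metric.closedBall (0:ℂ) R, u ζ ≤ 0) :
    - u z ≤ R ^ 2 / s ^ 2 + (1 / (2 * Real.pi)) *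
      ∫ ζ in Metric.ball (0:ℂ) s, (Real.log s - Real.log ‖ζ‖) * laplacian u (z + ζ) := by
  have hR : 0 < R := by linarith [norm_nonneg z]
  rw [← jensen_area hu z hs]
  have hsub : Metric.ball z s ⊆ Metric.ball 0 R := by
    apply Metric.ball_subset_ball'
    simpa [add_comm] using hz
  have hl' : ∀ ζ ∈ Metric.ball (0:ℂ) s, 0 ≤ laplacian u (z + ζ) := by
    intro ζ hζ
    apply hl _ (hsub _)
    simpa using hζ
  have hc := cM_cont hu z
  have hcu := hu.continuous
  have h1 := area_mean hu z hs
  have h2 := l1_bound hu hR hl h0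
  have h3 : ∫ ζ in Metric.ball (0:ℂ) R, u ζ ≤ ∫ ζ in Metric.ball (0:ℂ) s, u (z + ζ) := by
    have e : ∫ ζ in Metric.ball (0:ℂ) s, u (z + ζ) = ∫ ζ in Metric.ball z s, u ζ := by
      have := (measurePreserving_add_left (volume : Measure ℂ) z).setIntegral_preimage_emb
        (measurableEmbedding_addLeft z) u (Metric.ball z s)
      rw [← this]
      congr 2
      ext ζ; simp
    rw [e, ← neg_le_neg_iff, ← integral_neg, ← integral_neg]
    apply setIntegral_mono_set
    · exact ((hcu.neg).continuousOn.integrableOn_compact (isCompact_closedBall 0 R)).mono_set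
              Metric.ball_subset_closedBall
    · refine (ae_restrict_iff' measurableSet_ball).2 (Eventually.of_forall fun ζ hζ => ?_)
      have := hneg ζ (Metric.ball_subset_closedBall hζ)
      simpa using this
    · exact hsub.eventuallyLE
  have h4 : ∫ t in (0:ℝ)..s, t * cM u z t ≤ ∫ t in (0:ℝ)..s, t * cM u z s := by
    apply intervalIntegral.integral_mono_on hs.le
    · apply Continuous.intervalIntegrable; fun_prop
    · apply Continuous.intervalIntegrable; fun_prop
    · intro t ht
      rcases ht.1.eq_or_lt with h | h
      · simp [← h]
      · apply mul_le_mul_of_nonneg_left _ h.le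
        exact cM_mono hu z h ht.2 hl'
  rw [intervalIntegral.integral_mul_const, integral_id] at h4
  have h5 : -(Real.pi * R^2) ≤ s^2/2 * cM u z s := by
    calc _ ≤ _ := h2
      _ ≤ _ := h3
      _ = _ := h1
      _ ≤ _ := h4
      _ = _ := by ring
  have h6 : - cM u z s ≤ 2 * Real.pi * (R^2/s^2) := by
    have : - cM u z s * (s^2) ≤ 2 * Real.pi * R^2 := by linarith
    rw [← mul_div_assoc, le_div_iff₀ (by positivity)]
    exact this
  have h7 : R ^ 2 / s ^ 2 + 1 / (2 * Real.pi) * (cM u z s - 2 * Real.pi * u z) =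
    - u z + (1 / (2 * Real.pi)) * (cM u z s + 2 * Real.pi * (R^2/s^2)) := by
    have := Real.pi_pos.ne'
    field_simp
    ring
  rw [h7]
  have : 0 ≤ (1 / (2 * Real.pi)) * (cM u z s + 2 * Real.pi * (R^2/s^2)) := by
    apply mul_nonneg (by positivity); linarith
  linarith


/-- truncated log kernel -/
noncomputable def hK (s : ℝ) (w : ℂ) : ℝ := max 0 (Real.log s - Real.log ‖w‖)

lemma hK_nonneg (s : ℝ) (w : ℂ) : 0 ≤ hK s w := le_max_left _ _

lemma hK_meas (s : ℝ) : Measurable (hK s) := by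
  unfold hK
  have := Real.measurable_log
  fun_prop

lemma expK_int {m : ℝ} (hm : m < 2) {s : ℝ} (hs : 0 < s) {g : ℂ → ℝ} (hg : Continuous g) (z : ℂ) (A : ℝ) :
    IntegrableOn (fun ζ : ℂ => Real.exp (m * hK s (ζ - z)) * g ζ) (Metric.ball 0 A) := by
  have h1 := expker_int hm hs (A + ‖z‖ + 1)
  have h2 := ((measurePreserving_sub_right (volume : Measure ℂ) z).integrableOn_comp_preimage
    (MeasurableEquiv.subRight z).measurableEmbedding).2 h1
  have h3 : IntegrableOn (fun ζ : ℂ => Real.exp (m * hK s (ζ - z))) (Metric.closedBall 0 A) := by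
    refine IntegrableOn.mono_set h2 ?_
    intro ζ hζ
    simp only [mem_preimage, Metric.mem_ball, dist_zero_right, Metric.mem_closedBall] at hζ ⊢
    linarith [norm_sub_le ζ z]
  exact (h3.mul_continuousOn hg.continuousOn (isCompact_closedBall _ _)).mono_set
    Metric.ball_subset_closedBall

lemma linK_int {m : ℝ} (hm0 : 0 ≤ m) (hm : m < 2) {s : ℝ} (hs : 0 < s) {g : ℂ → ℝ} (hg : Continuous g)
    (z : ℂ) (A : ℝ) :
    IntegrableOn (fun ζ : ℂ => m * hK s (ζ - z) * g ζ) (Metric.ball 0 A) := by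
  refine Integrable.mono (expK_int hm hs hg z A) ?_ ?_
  · apply Measurable.aestronglyMeasurable
    have := hK_meas s
    have := hg.measurable
    fun_prop
  · refine Eventually.of_forall fun ζ => ?_
    rw [norm_mul (m * hK s (ζ - z)), norm_mul (Real.exp _)]
    apply mul_le_mul_of_nonneg_right _ (norm_nonneg _)
    have h0 : 0 ≤ m * hK s (ζ - z) := mul_nonneg hm0 (hK_nonneg _ _)
    rw [Real.norm_of_nonneg h0, Real.norm_of_nonneg (Real.exp_pos _).le]
    linarith [Real.add_one_le_exp (m * hK s (ζ - z))]

/-- Jensen's inequality for exp with a density. -/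
lemma jensen_exp {B : Set ℂ} (hB : MeasurableSet B) {f g : ℂ → ℝ} (hg : ∀ ζ ∈ B, 0 ≤ g ζ)
    (hg1 : ∫ ζ in B, g ζ = 1) (hgi : IntegrableOn g B) (hfi : IntegrableOn (fun ζ => f ζ * g ζ) B)
    (hei : IntegrableOn (fun ζ => Real.exp (f ζ) * g ζ) B) :
    Real.exp (∫ ζ in B, f ζ * g ζ) ≤ ∫ ζ in B, Real.exp (f ζ) * g ζ := by
  set a := ∫ ζ in B, f ζ * g ζ
  have h1 : ∫ ζ in B, (Real.exp a * (f ζ * g ζ) + (Real.exp a * (1 - a)) * g ζ) ≤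
      ∫ ζ in B, Real.exp (f ζ) * g ζ := by
    apply setIntegral_mono_on ((hfi.const_mul _).add (hgi.const_mul _)) hei hB
    intro ζ hζ
    have h2 : Real.exp a * (f ζ + (1 - a)) ≤ Real.exp (f ζ) := by
      have h3 := Real.add_one_le_exp (f ζ - a)
      have h4 : Real.exp (f ζ) = Real.exp a * Real.exp (f ζ - a) := by
        rw [← Real.exp_add]; congr 1; ring
      rw [h4]
      apply mul_le_mul_of_nonneg_left _ (Real.exp_pos a).le
      linarith
    have := mul_le_mul_of_nonneg_right h2 (hg ζ hζ)
    refine le_trans (le_of_eq ?_) this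
    simp only [Pi.add_apply]
    ring
  rw [integral_add (hfi.const_mul _) (hgi.const_mul _), integral_const_mul, integral_const_mul, hg1] at h1
  change Real.exp a * a + _ ≤ _ at h1
  linarith

/-- The one-variable bound. -/
lemma disc_bound {R ρ ρ' : ℝ} (hρ : 0 < ρ) (hρρ : ρ < ρ') (hρR : ρ' < R)
    (hL : 1 / 2 < Real.log R - Real.log ρ') :
    ∃ C : ENNReal, C < ⊤ ∧ ∀ u : ℂ → ℝ, ContDiff ℝ (⊤ : ℕ∞) u →
      (∀ ζ ∈ Metric.ball (0:ℂ) R, 0 ≤ laplacian u ζ) → -1 ≤ u 0 →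
      (∀ ζ ∈ Metric.closedBall (0:ℂ) R, u ζ ≤ 0) →
      ∫⁻ z in Metric.ball (0:ℂ) ρ, ENNReal.ofReal (Real.exp (-u z)) ≤ C := by
  set L := Real.log R - Real.log ρ' with hLd
  set m := 1 / L with hm
  set s := ρ' - ρ with hsd
  have hs : 0 < s := by linarith
  have hL0 : 0 < L := by linarith
  have hm0 : 0 < m := by positivity
  have hm2 : m < 2 := by
    rw [hm, div_lt_iff₀ hL0]; linarith
  set K := R ^ 2 / s ^ 2
  set I := ∫⁻ w in Metric.ball (0:ℂ) (ρ + ρ'), ENNReal.ofReal (Real.exp (m * hK s w))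
  refine ⟨ENNReal.ofReal (Real.exp K) * I, ?_, ?_⟩
  · apply ENNReal.mul_lt_top ENNReal.ofReal_lt_top
    have := expker_int hm2 hs (ρ + ρ')
    have h2 := this.2
    rw [hasFiniteIntegral_iff_ofReal (Eventually.of_forall fun _ => (Real.exp_pos _).le)] at h2
    exact h2
  intro u hu hl h0 hneg
  set B := Metric.ball (0:ℂ) ρ' with hB
  have hlc := lap_cont hu
  set N := ∫ ζ in B, laplacian u ζ with hN
  have hmass : N ≤ 2 * Real.pi * m := by
    have := mass_bound hu (hρ.trans hρρ) hρR hl h0 hneg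
    rw [hm, mul_one_div, le_div_iff₀ hL0]
    linarith
  set V := volume.real B with hV
  have hV0 : 0 < V := by
    rw [hV, Measure.real]
    exact ENNReal.toReal_pos (Metric.measure_ball_pos _ _ (hρ.trans hρρ)).ne' measure_ball_lt_top.ne
  set c := (2 * Real.pi * m - N) / V with hc
  have hc0 : 0 ≤ c := div_nonneg (by linarith) hV0.le
  have hpm : 0 < 2 * Real.pi * m := by have := Real.pi_pos; positivity
  set g : ℂ → ℝ := fun ζ => (laplacian u ζ + c) / (2 * Real.pi * m) with hg
  have hgc : Continuous g := by fun_prop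
  have hBR : B ⊆ Metric.ball 0 R := Metric.ball_subset_ball hρR.le
  have hg0 : ∀ ζ ∈ B, 0 ≤ g ζ := fun ζ hζ =>
    div_nonneg (add_nonneg (hl ζ (hBR hζ)) hc0) hpm.le
  have cint : ∀ f : ℂ → ℝ, Continuous f → IntegrableOn f B := fun f hf =>
    (hf.continuousOn.integrableOn_compact (isCompact_closedBall 0 ρ')).mono_set
              Metric.ball_subset_closedBall
  have hg1 : ∫ ζ in B, g ζ = 1 := by
    rw [hg, integral_div, integral_add (cint _ hlc) (cint _ continuous_const), setIntegral_const, ← hN,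
      smul_eq_mul, ← hV, hc, mul_div_cancel₀ _ hV0.ne']
    rw [add_sub_cancel, div_self hpm.ne']
  have hpt : ∀ z ∈ Metric.ball (0:ℂ) ρ, ENNReal.ofReal (Real.exp (-u z)) ≤
      ENNReal.ofReal (Real.exp K) *
        ∫⁻ ζ in B, ENNReal.ofReal (Real.exp (m * hK s (ζ - z))) * ENNReal.ofReal (g ζ) := by
    intro z hz
    have hzn : ‖z‖ < ρ := by simpa using hz
    have h1 := ptwise hu hs z (R := R) (by linarith) hl h0 hneg
    have h2 : (1 / (2 * Real.pi)) *
      ∫ ζ in Metric.ball (0:ℂ) s, (Real.log s - Real.log ‖ζ‖) * laplacian u (z + ζ) ≤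
        ∫ ζ in B, m * hK s (ζ - z) * g ζ := by
      have hsub : Metric.ball z s ⊆ B := by
        apply Metric.ball_subset_ball'
        simp; linarith
      have e : ∫ ζ in Metric.ball (0:ℂ) s, (Real.log s - Real.log ‖ζ‖) * laplacian u (z + ζ) =
          ∫ ζ in Metric.ball z s, (Real.log s - Real.log ‖ζ - z‖) * laplacian u ζ := by
        have := (measurePreserving_add_left (volume : Measure ℂ) z).setIntegral_preimage_emb
          (measurableEmbedding_addLeft z) (fun ζ => (Real.log s - Real.log ‖ζ - z‖) * laplacian u ζ)
            (Metric.ball z s)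
        rw [← this]
        simp only [add_sub_cancel_left]
        congr 2
        ext ζ; simp
      have hi := linK_int hm0.le hm2 hs hgc z ρ'
      rw [e, ← integral_const_mul]
      calc _ ≤ ∫ ζ in Metric.ball z s, m * hK s (ζ - z) * g ζ := by
            apply integral_mono_of_nonneg
            · have hae : ∀ᵐ ζ : ℂ, ζ ≠ z := by simp [ae_iff]
              refine (ae_restrict_iff' measurableSet_ball).2 ?_
              filter_upwards [hae] with ζ h0 hζ
              apply mul_nonneg (by have := Real.pi_pos; positivity)
              apply mul_nonneg _ (hl ζ (hBR (hsub hζ)))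
              have : ‖ζ - z‖ < s := by simpa [dist_eq_norm] using hζ
              linarith [Real.log_le_log (norm_pos_iff.2 (sub_ne_zero.2 h0)) this.le]
            · exact IntegrableOn.mono_set hi hsub
            · refine (ae_restrict_iff' measurableSet_ball).2 (Eventually.of_forall fun ζ hζ => ?_)
              have e2 : m * hK s (ζ - z) * g ζ = 1 / (2 * Real.pi) * (hK s (ζ - z) * (laplacian u ζ + c)) := by
                rw [hg]
                have := Real.pi_pos.ne'
                field_simp
              simp only [e2]
              apply mul_le_mul_of_nonneg_left _ (by have := Real.pi_pos; positivity)
              have p1 := hl ζ (hBR (hsub hζ))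
              have p2 := hK_nonneg s (ζ - z)
              have p3 : Real.log s - Real.log ‖ζ - z‖ ≤ hK s (ζ - z) := le_max_right _ _
              nlinarith
        _ ≤ _ := by
            apply setIntegral_mono_set hi
            · refine (ae_restrict_iff' measurableSet_ball).2 (Eventually.of_forall fun ζ hζ => ?_)
              exact mul_nonneg (mul_nonneg hm0.le (hK_nonneg _ _)) (hg0 ζ hζ)
            · exact hsub.eventuallyLE
    have h3 := jensen_exp (B := B) measurableSet_ball hg0 hg1 (cint _ hgc)
      (linK_int hm0.le hm2 hs hgc z ρ') (expK_int hm2 hs hgc z ρ')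
    have h4 : Real.exp (-u z) ≤ Real.exp K * ∫ ζ in B, Real.exp (m * hK s (ζ - z)) * g ζ := by
      calc _ ≤ Real.exp (K + ∫ ζ in B, m * hK s (ζ - z) * g ζ) := Real.exp_le_exp.2 (by linarith)
        _ = Real.exp K * Real.exp (∫ ζ in B, m * hK s (ζ - z) * g ζ) := Real.exp_add _ _
        _ ≤ _ := mul_le_mul_of_nonneg_left h3 (Real.exp_pos _).le
    refine (ENNReal.ofReal_le_ofReal h4).trans ?_
    rw [ENNReal.ofReal_mul (Real.exp_pos _).le,
      ofReal_integral_eq_lintegral_ofReal (expK_int hm2 hs hgc z ρ')]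
    · simp_rw [ENNReal.ofReal_mul (Real.exp_pos _).le]
      exact le_rfl
    · refine (ae_restrict_iff' measurableSet_ball).2 (Eventually.of_forall fun ζ hζ => ?_)
      exact mul_nonneg (Real.exp_pos _).le (hg0 ζ hζ)
  have hKm := hK_meas s
  have hgm := hgc.measurable
  calc _ ≤ ∫⁻ z in Metric.ball (0:ℂ) ρ, ENNReal.ofReal (Real.exp K) *
        ∫⁻ ζ in B, ENNReal.ofReal (Real.exp (m * hK s (ζ - z))) * ENNReal.ofReal (g ζ) :=
        setLIntegral_mono' measurableSet_ball hpt
    _ = ENNReal.ofReal (Real.exp K) * ∫⁻ z in Metric.ball (0:ℂ) ρ, 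
        ∫⁻ ζ in B, ENNReal.ofReal (Real.exp (m * hK s (ζ - z))) * ENNReal.ofReal (g ζ) := by
        rw [lintegral_const_mul' _ _ ENNReal.ofReal_ne_top]
    _ = ENNReal.ofReal (Real.exp K) * ∫⁻ ζ in B, ∫⁻ z in Metric.ball (0:ℂ) ρ,
         ENNReal.ofReal (Real.exp (m * hK s (ζ - z))) * ENNReal.ofReal (g ζ) := by
        rw [lintegral_lintegral_swap]
        apply Measurable.aemeasurable
        unfold Function.uncurry
        fun_prop
    _ ≤ ENNReal.ofReal (Real.exp K) * ∫⁻ ζ in B, I * ENNReal.ofReal (g ζ) := by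
        apply mul_le_mul_right
        apply setLIntegral_mono' measurableSet_ball
        intro ζ hζ
        rw [lintegral_mul_const' _ _ ENNReal.ofReal_ne_top]
        apply mul_le_mul_left
        have hs1 : ∀ z, hK s (ζ - z) = hK s (z - ζ) := fun z => by
          unfold hK; rw [norm_sub_rev]
        simp_rw [hs1]
        have := (measurePreserving_sub_right (volume : Measure ℂ) ζ).setLIntegral_comp_preimage_emb
          (MeasurableEquiv.subRight ζ).measurableEmbedding
            (fun w => ENNReal.ofReal (Real.exp (m * hK s w))) (Metric.ball 0 (ρ + ρ'))
        refine le_trans ?_ this.le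
        apply lintegral_mono_set
        intro z hz
        have hζ' : ‖ζ‖ < ρ' := by simpa [hB] using hζ
        simp only [mem_preimage, Metric.mem_ball, dist_zero_right] at hz ⊢
        linarith [norm_sub_le z ζ]
    _ = _ := by
        rw [lintegral_const_mul _ (by fun_prop), ← ofReal_integral_eq_lintegral_ofReal (cint _ hgc)
          ((ae_restrict_iff' measurableSet_ball).2 (Eventually.of_forall hg0)), hg1]
        simp

lemma laplacian_congr {f g : ℂ → ℝ} {z : ℂ} (h : f =ᶠ[𝓝 z] g) : laplacian f z = laplacian g z := by
  have h1 := h.fderiv (𝕜 := ℝ)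
  have h2 (v : ℂ) : (fun w => fderiv ℝ f w v) =ᶠ[𝓝 z] (fun w => fderiv ℝ g w v) :=
    h1.mono fun w hw => by simp only [hw]
  unfold laplacian
  rw [(h2 1).fderiv_eq, (h2 Complex.I).fderiv_eq]

lemma disc_bound' {R ρ : ℝ} (hR : 0 < R) (hρ : 0 < ρ) (hρR : ρ < Real.exp (-(1/2)) * R) :
    ∃ C : ENNReal, C < ⊤ ∧ ∀ u : ℂ → ℝ, ContDiffOn ℝ (⊤ : ℕ∞) u (Metric.ball (0:ℂ) R) →
      (∀ ζ ∈ Metric.ball (0:ℂ) R, 0 ≤ laplacian u ζ) → -1 ≤ u 0 →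
      (∀ ζ ∈ Metric.ball (0:ℂ) R, u ζ ≤ 0) →
      ∫⁻ z in Metric.ball (0:ℂ) ρ, ENNReal.ofReal (Real.exp (-u z)) ≤ C := by
  set e := Real.exp (-(1/2)) with he
  have he0 : 0 < e := Real.exp_pos _
  have he1 : e < 1 := by rw [he, Real.exp_lt_one_iff]; norm_num
  obtain ⟨R', hR1, hR2⟩ := exists_between (show ρ / e < R by rwa [div_lt_iff₀ he0, mul_comm])
  have hR1' : ρ < e * R' := by rwa [div_lt_iff₀ he0, mul_comm] at hR1
  have hR'0 : 0 < R' := lt_trans (by positivity) hR1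
  obtain ⟨ρ', h1, h2⟩ := exists_between hR1'
  have h3 : ρ' < R' := by nlinarith
  have hρ' : 0 < ρ' := hρ.trans h1
  have hL : 1 / 2 < Real.log R' - Real.log ρ' := by
    have := Real.log_lt_log hρ' h2
    rw [Real.log_mul he0.ne' hR'0.ne', he, Real.log_exp] at this
    linarith
  obtain ⟨C, hC, H⟩ := disc_bound hρ h1 h3 hL
  refine ⟨C, hC, ?_⟩
  intro u hu hl h0 hneg
  obtain ⟨a, ha1, ha2⟩ := exists_between hR2
  obtain ⟨b, hb1, hb2⟩ := exists_between ha2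
  let χ : ContDiffBump (0:ℂ) := ⟨a, b, hR'0.trans ha1, hb1⟩
  have hχ1 : ∀ z ∈ Metric.closedBall (0:ℂ) a, χ z = 1 := fun z hz => χ.one_of_mem_closedBall hz
  have hev : ∀ z ∈ Metric.closedBall (0:ℂ) R', (fun w => χ w * u w) =ᶠ[𝓝 z] u := by
    intro z hz
    have : Metric.ball (0:ℂ) a ∈ 𝓝 z := Metric.isOpen_ball.mem_nhds
      (Metric.closedBall_subset_ball ha1 hz)
    filter_upwards [this] with w hw
    rw [hχ1 w (Metric.ball_subset_closedBall hw), one_mul]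
  have heq : ∀ z ∈ Metric.closedBall (0:ℂ) R', χ z * u z = u z := fun z hz => (hev z hz).eq_of_nhds
  have hsm : ContDiff ℝ (⊤ : ℕ∞) (fun w => χ w * u w) := by
    rw [contDiff_iff_contDiffAt]
    intro z
    by_cases hz : z ∈ Metric.ball (0:ℂ) R
    · exact χ.contDiff.contDiffAt.mul (hu.contDiffAt (Metric.isOpen_ball.mem_nhds hz))
    · have hz' : z ∉ tsupport χ := by
        rw [χ.tsupport_eq]
        intro h
        exact hz (Metric.closedBall_subset_ball hb2 h)
      have : (fun w => χ w * u w) =ᶠ[𝓝 z] fun _ => 0 := by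
        filter_upwards [notMem_tsupport_iff_eventuallyEq.1 hz'] with w hw
        rw [hw]; simp
      exact contDiffAt_const.congr_of_eventuallyEq this
  have := H (fun w => χ w * u w) hsm ?_ ?_ ?_
  · refine le_trans (le_of_eq ?_) this
    apply setLIntegral_congr_fun measurableSet_ball
    intro z hz
    simp only
    rw [heq z (Metric.ball_subset_closedBall (Metric.ball_subset_ball (by linarith) hz))]
  · intro ζ hζ
    rw [laplacian_congr (hev ζ (Metric.ball_subset_closedBall hζ))]
    exact hl ζ (Metric.ball_subset_ball hR2.le hζ)
  · rw [heq 0 (Metric.mem_closedBall_self hR'0.le)]; exact h0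
  · intro ζ hζ
    rw [heq ζ hζ]
    exact hneg ζ (Metric.closedBall_subset_ball hR2 hζ)

section slice
variable {E : Type*} [NormedAddCommGroup E] [NormedSpace ℂ E] [FiniteDimensional ℂ E]
  [MeasurableSpace E] [BorelSpace E] (μ : Measure E) [μ.IsAddHaarMeasure]

lemma lint_smul {w : ℂ} (hw : w ≠ 0) (f : E → ENNReal) (hf : Measurable f) :
    ∫⁻ z, f (w • z) ∂μ = ENNReal.ofReal ((‖w‖ ^ (2 * Module.finrank ℂ E))⁻¹) * ∫⁻ z, f z ∂μ := by
  have : FiniteDimensional ℝ E := FiniteDimensional.complexToReal E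
  set T : E →ₗ[ℝ] E := (w • (LinearMap.id : E →ₗ[ℂ] E)).restrictScalars ℝ with hT
  have hdet : LinearMap.det T = ‖w‖ ^ (2 * Module.finrank ℂ E) := by
    rw [hT, LinearMap.det_restrictScalars, LinearMap.det_smul, LinearMap.det_id, mul_one,
      Algebra.norm_complex_apply, map_pow, Complex.normSq_eq_norm_sq, ← pow_mul]
  have hd0 : LinearMap.det T ≠ 0 := by
    rw [hdet]; exact pow_ne_zero _ (norm_ne_zero_iff.2 hw)
  have hmap := Measure.map_linearMap_addHaar_eq_smul_addHaar μ hd0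
  have hTm : Measurable T := (T.continuous_of_finiteDimensional).measurable
  calc ∫⁻ z, f (w • z) ∂μ = ∫⁻ z, f (T z) ∂μ := rfl
    _ = ∫⁻ z, f z ∂(μ.map T) := (lintegral_map hf hTm).symm
    _ = _ := by
      rw [hmap, lintegral_smul_measure, hdet, abs_of_nonneg (by positivity)]
      rfl

lemma slice_bound (hn : 1 ≤ Module.finrank ℂ E) {ρ : ℝ} (hρ : 0 < ρ) (C : ENNReal) (f : E → ENNReal)
    (hf : Measurable f) (hsupp : ∀ z, ρ ≤ ‖z‖ → f z = 0)
    (hC : ∀ v : E, ‖v‖ = 1 → ∫⁻ w : ℂ, f (w • v) ≤ C) :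
    ENNReal.ofReal (Real.pi / 16) * ∫⁻ z, f z ∂μ ≤
      ENNReal.ofReal (ρ ^ (2 * Module.finrank ℂ E - 2)) * C * μ (Metric.ball 0 2) := by
  set n := Module.finrank ℂ E with hnd
  have : FiniteDimensional ℝ E := FiniteDimensional.complexToReal E
  have : ProperSpace E := FiniteDimensional.proper ℂ E
  have : Nontrivial E := Module.nontrivial_of_finrank_pos (R := ℂ) (by omega)
  set S : Set E := {z | 1 < ‖z‖ ∧ ‖z‖ < 2} with hS
  have hSm : MeasurableSet S := by
    apply MeasurableSet.inter
    · exact (isOpen_lt continuous_const continuous_norm).measurableSet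
    · exact (isOpen_lt continuous_norm continuous_const).measurableSet
  have hsm : Measurable fun p : ℂ × E => p.1 • p.2 := continuous_smul.measurable
  let a : ℂ → ENNReal := fun w => ENNReal.ofReal (‖w‖ ^ (2 * n - 2))
  have ham : Measurable a := by fun_prop
  -- upper bound
  have hup : ∫⁻ z in S, (∫⁻ w : ℂ, a w * f (w • z)) ∂μ ≤
      ENNReal.ofReal (ρ ^ (2 * n - 2)) * C * μ (Metric.ball 0 2) := by
    calc _ ≤ ∫⁻ z in S, ENNReal.ofReal (ρ ^ (2 * n - 2)) * C ∂μ := by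
          apply setLIntegral_mono' hSm
          intro z hz
          have hz1 : 1 < ‖z‖ := hz.1
          have hz0 : (0:ℝ) < ‖z‖ := by linarith
          have hzc : (‖z‖ : ℂ) ≠ 0 := by exact_mod_cast hz0.ne'
          have hb : ∫⁻ w : ℂ, f (w • z) ≤ C := by
            set v := ((‖z‖ : ℂ)⁻¹) • z with hv
            have hv1 : ‖v‖ = 1 := by
              rw [hv, norm_smul]; simp [hz0.ne']
            have hzv : ∀ w : ℂ, w • z = ((‖z‖ : ℂ) • w) • v := by
              intro w
              rw [hv, smul_smul, smul_eq_mul]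
              congr 1
              field_simp
            simp_rw [hzv]
            rw [lint_smul (volume : Measure ℂ) hzc (fun w => f (w • v))
              (hf.comp (by fun_prop : Measurable fun w : ℂ => w • v))]
            calc _ ≤ 1 * ∫⁻ w : ℂ, f (w • v) := by
                  apply mul_le_mul_left
                  rw [ENNReal.ofReal_le_one]
                  apply inv_le_one_of_one_le₀
                  apply one_le_pow₀
                  simp; linarith
              _ ≤ C := by rw [one_mul]; exact hC v hv1
          calc _ ≤ ∫⁻ w : ℂ, ENNReal.ofReal (ρ ^ (2 * n - 2)) * f (w • z) := by
                apply lintegral_mono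
                intro w
                by_cases h : ρ ≤ ‖w • z‖
                · simp [hsupp _ h]
                · apply mul_le_mul_left
                  apply ENNReal.ofReal_le_ofReal
                  apply pow_le_pow_left₀ (norm_nonneg _)
                  rw [norm_smul] at h
                  push Not at h
                  nlinarith [norm_nonneg w]
            _ = ENNReal.ofReal (ρ ^ (2 * n - 2)) * ∫⁻ w : ℂ, f (w • z) :=
                lintegral_const_mul' _ _ ENNReal.ofReal_ne_top
            _ ≤ _ := mul_le_mul_right hb _
      _ = ENNReal.ofReal (ρ ^ (2 * n - 2)) * C * μ S := by rw [setLIntegral_const]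
      _ ≤ _ := by
          apply mul_le_mul_right
          apply measure_mono
          intro z hz
          simpa using hz.2
  refine le_trans ?_ hup
  -- lower bound
  let A : ℂ → E → ENNReal := fun w z => ({p : ℂ × E | ‖p.1‖ < ‖p.2‖ ∧ ‖p.2‖ < 2 * ‖p.1‖}).indicator
    (fun p => f p.2) (w, z)
  have hset : MeasurableSet {p : ℂ × E | ‖p.1‖ < ‖p.2‖ ∧ ‖p.2‖ < 2 * ‖p.1‖} := by
    apply MeasurableSet.inter
    · exact (isOpen_lt (f := fun p : ℂ × E => ‖p.1‖) (g := fun p : ℂ × E => ‖p.2‖)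
        (by fun_prop) (by fun_prop)).measurableSet
    · exact (isOpen_lt (f := fun p : ℂ × E => ‖p.2‖) (g := fun p : ℂ × E => 2 * ‖p.1‖)
        (by fun_prop) (by fun_prop)).measurableSet
  have hAm : Measurable (Function.uncurry A) := (hf.comp measurable_snd).indicator hset
  have hsw : ∫⁻ z in S, (∫⁻ w : ℂ, a w * f (w • z)) ∂μ =
      ∫⁻ w : ℂ, a w * ∫⁻ z in S, f (w • z) ∂μ := by
    rw [lintegral_lintegral_swap]
    · congr 1
      ext w
      rw [lintegral_const_mul' _ _ ENNReal.ofReal_ne_top]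
    · apply Measurable.aemeasurable
      apply (ham.comp measurable_snd).mul
      exact hf.comp (hsm.comp measurable_swap)
  have hae : ∀ᵐ w : ℂ, w ≠ 0 := by simp [ae_iff]
  have hin : ∀ w : ℂ, w ≠ 0 → a w * ∫⁻ z in S, f (w • z) ∂μ =
      ∫⁻ z, ENNReal.ofReal ((‖w‖ ^ 2)⁻¹) * A w z ∂μ := by
    intro w hw
    have hw0 : 0 < ‖w‖ := norm_pos_iff.2 hw
    have h1 : ∫⁻ z in S, f (w • z) ∂μ = ∫⁻ z, A w (w • z) ∂μ := by
      rw [← lintegral_indicator hSm]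
      congr 1
      ext z
      simp only [A, indicator, mem_ofPred_eq, norm_smul, hS]
      have e1 : (‖w‖ < ‖w‖ * ‖z‖ ∧ ‖w‖ * ‖z‖ < 2 * ‖w‖) ↔ (1 < ‖z‖ ∧ ‖z‖ < 2) := by
        rw [mul_comm 2, mul_lt_mul_iff_right₀ hw0, lt_mul_iff_one_lt_right hw0]
      simp only [e1]
    rw [h1, lint_smul μ hw (A w) (hAm.comp measurable_prodMk_left), ← mul_assoc,
      lintegral_const_mul' _ _ ENNReal.ofReal_ne_top]
    congr 1
    rw [← ENNReal.ofReal_mul (by positivity)]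
    congr 1
    rw [← hnd, show 2 * n = (2 * n - 2) + 2 by omega, pow_add]
    field_simp
    simp
  rw [hsw, lintegral_congr_ae (hae.mono hin), lintegral_lintegral_swap, ← lintegral_const_mul _ hf]
  swap
  · apply Measurable.aemeasurable
    apply Measurable.mul _ hAm
    fun_prop
  have haeE : ∀ᵐ z ∂μ, z ≠ 0 := by simp [ae_iff]
  apply lintegral_mono_ae
  filter_upwards [haeE] with z hz
  have hz0 : 0 < ‖z‖ := norm_pos_iff.2 hz
  set r := ‖z‖ with hr
  have hball : ∀ w ∈ Metric.ball ((3 * r / 4 : ℝ) : ℂ) (r / 4), r / 2 < ‖w‖ ∧ ‖w‖ < r := by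
    intro w hw
    rw [Metric.mem_ball, dist_eq_norm] at hw
    have hn : ‖((3 * r / 4 : ℝ) : ℂ)‖ = 3 * r / 4 := by
      rw [Complex.norm_real, Real.norm_of_nonneg (by positivity)]
    have h1 := norm_sub_norm_le w ((3 * r / 4 : ℝ) : ℂ)
    have h2 := norm_sub_norm_le ((3 * r / 4 : ℝ) : ℂ) w
    rw [norm_sub_rev] at h2
    constructor <;> linarith
  calc ENNReal.ofReal (Real.pi / 16) * f z
      = ∫⁻ w in Metric.ball ((3 * r / 4 : ℝ) : ℂ) (r / 4), ENNReal.ofReal ((r ^ 2)⁻¹) * f z := by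
        rw [setLIntegral_const, Complex.volume_ball, mul_right_comm]
        congr 1
        rw [← ENNReal.ofReal_pow (by positivity), ← ENNReal.ofReal_coe_nnreal, ← ENNReal.ofReal_mul (by positivity),
          ← ENNReal.ofReal_mul (by positivity)]
        congr 1
        simp only [NNReal.coe_real_pi]
        field_simp
        norm_num
    _ ≤ ∫⁻ w in Metric.ball ((3 * r / 4 : ℝ) : ℂ) (r / 4), ENNReal.ofReal ((‖w‖ ^ 2)⁻¹) * A w z := by
        apply setLIntegral_mono' measurableSet_ball
        intro w hw
        obtain ⟨h1, h2⟩ := hball w hw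
        have hA : A w z = f z := by
          simp only [A]
          rw [indicator_of_mem]
          exact ⟨h2, by linarith⟩
        rw [hA]
        apply mul_le_mul_left
        apply ENNReal.ofReal_le_ofReal
        have : 0 < ‖w‖ := by linarith
        gcongr
    _ ≤ _ := setLIntegral_le_lintegral _ _
end slice

/-- For every `n ≥ 1`, `R > 0` and `ρ` with `R/2 ≤ ρ < e^{-1/2} R`, there is a constant `C > 0`,
depending only on `R`, `ρ` and `n`, such that every smooth plurisubharmonic function `ψ` on the
open ball `B_R(0) ⊆ ℂⁿ` with `ψ(0) ≥ -1` and `ψ ≤ 0` on `B_R(0)` satisfies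
`∫_{B_ρ(0)} e^{-ψ} dV ≤ C`.  Plurisubharmonicity is expressed by requiring every restriction
of `ψ` to a complex line to have nonnegative Laplacian where defined. -/
theorem stmt_1 (n : ℕ) (hn : 1 ≤ n) (R ρ : ℝ) (hR : 0 < R) (hρ₁ : R / 2 ≤ ρ)
    (hρ₂ : ρ < Real.exp (-(1/2)) * R) :
    ∃ C : ℝ, 0 < C ∧ ∀ ψ : EuclideanSpace ℂ (Fin n) → ℝ,
      ContDiffOn ℝ (⊤ : ℕ∞) ψ (Metric.ball (0 : EuclideanSpace ℂ (Fin n)) R) →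
      (∀ z ∈ Metric.ball (0 : EuclideanSpace ℂ (Fin n)) R, ∀ v : EuclideanSpace ℂ (Fin n),
        ∀ w : ℂ, z + w • v ∈ Metric.ball (0 : EuclideanSpace ℂ (Fin n)) R →
          0 ≤ laplacian (fun u : ℂ => ψ (z + u • v)) w) →
      -1 ≤ ψ 0 →
      (∀ z ∈ Metric.ball (0 : EuclideanSpace ℂ (Fin n)) R, ψ z ≤ 0) →
      ∫ z in Metric.ball (0 : EuclideanSpace ℂ (Fin n)) ρ, Real.exp (-ψ z) ≤ C := by
  have hρ : 0 < ρ := by linarith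
  obtain ⟨C, hC, H⟩ := disc_bound' hR hρ hρ₂
  set Q := ENNReal.ofReal (ρ ^ (2 * Module.finrank ℂ (EuclideanSpace ℂ (Fin n)) - 2)) * C *
    (volume : Measure (EuclideanSpace ℂ (Fin n))) (Metric.ball 0 2) with hQ
  have hQt : Q ≠ ⊤ := by
    apply ENNReal.mul_ne_top (ENNReal.mul_ne_top ENNReal.ofReal_ne_top hC.ne)
    exact measure_ball_lt_top.ne
  refine ⟨Q.toReal / (Real.pi / 16) + 1, by have := Real.pi_pos; positivity, ?_⟩
  intro ψ hψ hl h0 hneg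
  have hρR : ρ < R := by
    have : Real.exp (-(1/2)) < 1 := by rw [Real.exp_lt_one_iff]; norm_num
    nlinarith
  have hcont : ContinuousOn (fun z => Real.exp (-ψ z)) (Metric.ball (0 : EuclideanSpace ℂ (Fin n)) ρ) :=
    Real.continuous_exp.comp_continuousOn
      ((hψ.continuousOn.mono (Metric.ball_subset_ball hρR.le)).neg)
  set f : EuclideanSpace ℂ (Fin n) → ENNReal :=
    (Metric.ball (0 : EuclideanSpace ℂ (Fin n)) ρ).indicator (fun z => ENNReal.ofReal (Real.exp (-ψ z))) with hf
  have hfm : Measurable f := by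
    have hc2 : ContinuousOn (fun z => ENNReal.ofReal (Real.exp (-ψ z)))
      (Metric.ball (0 : EuclideanSpace ℂ (Fin n)) ρ) := ENNReal.continuous_ofReal.comp_continuousOn hcont
    classical
    rw [hf, ← piecewise_eq_indicator]
    exact hc2.measurable_piecewise continuousOn_const measurableSet_ball
  have key := slice_bound (volume : Measure (EuclideanSpace ℂ (Fin n))) (by simpa using hn) hρ C f hfm
    (fun z hz => by
      rw [hf, indicator_of_notMem]; simpa using hz) (fun v hv => by
      have hmem : ∀ w : ℂ, ∀ r : ℝ, w ∈ Metric.ball (0:ℂ) r → w • v ∈ Metric.ball (0 : EuclideanSpace ℂ (Fin n)) r := by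
        intro w r hw
        simpa [norm_smul, hv] using hw
      refine le_trans (le_of_eq ?_) (H (fun w => ψ (w • v)) ?_ ?_ ?_ ?_)
      · rw [← lintegral_indicator measurableSet_ball]
        congr 1
        ext w
        simp only [hf, indicator, Metric.mem_ball, dist_zero_right, norm_smul, hv, mul_one]
      · apply hψ.comp _ (fun w hw => hmem w R hw)
        apply ContDiff.contDiffOn
        fun_prop
      · intro ζ hζ
        have := hl 0 (Metric.mem_ball_self hR) v ζ (by rw [zero_add]; exact hmem ζ R hζ)
        simpa only [zero_add] using this
      · simpa using h0
      · intro ζ hζ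
        exact hneg _ (hmem ζ R hζ))
  rw [← hQ] at key
  rw [integral_eq_lintegral_of_nonneg_ae (Eventually.of_forall fun _ => (Real.exp_pos _).le)
    (hcont.aestronglyMeasurable measurableSet_ball)]
  rw [← lintegral_indicator measurableSet_ball]
  change (∫⁻ z, f z).toReal ≤ _
  have hpi : 0 < Real.pi / 16 := by have := Real.pi_pos; positivity
  have h2 := ENNReal.toReal_mono hQt key
  rw [ENNReal.toReal_mul, ENNReal.toReal_ofReal hpi.le] at h2
  have h3 : (∫⁻ z, f z).toReal ≤ Q.toReal / (Real.pi / 16) := by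
    rw [le_div_iff₀ hpi, mul_comm]; exact h2
  linarith
end

section
/- Let R > 0 and let f : ℂ → ℝ be twice continuously differentiable on an open neighborhood of the closed disk of radius R centered at 0. Then for every z ∈ ℂ with |z| < R one has the Riesz (Poisson) representation f(z) = (1/2π) ∫_{B_R(0)} log( |Rz − Rζ| / |R² − z·conj(ζ)| ) · Δf(ζ) dA(ζ) + (1/2π) ∫_0^{2π} ((R² − |z|²)/|z − R e^{iθ}|²) · f(R e^{iθ}) dθ. -/
open MeasureTheory

open Set Filter Topology

namespace RieszAux

lemma locInt_inv : LocallyIntegrable (fun ζ : ℂ => ‖ζ‖⁻¹) := by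
  refine locallyIntegrable_of_norm_le_rpow (C := 1) (α := 1) (by simp) (by simp) ?_ ?_
  · refine Eventually.of_forall fun x => ?_
    simp [Real.rpow_neg_one]
  · exact (measurable_norm.inv).aestronglyMeasurable

lemma abs_log_le (t : ℝ) (ht : 0 ≤ t) : |Real.log t| ≤ t⁻¹ + t := by
  rcases ht.eq_or_lt with rfl | ht
  · simp
  have h1 := Real.log_le_sub_one_of_pos ht
  have h2 := Real.log_le_sub_one_of_pos (inv_pos.2 ht)
  rw [Real.log_inv] at h2
  have := inv_pos.2 ht
  rw [abs_le]; constructor <;> linarith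

lemma locInt_log : LocallyIntegrable (fun ζ : ℂ => Real.log ‖ζ‖) := by
  refine LocallyIntegrable.mono (f := fun ζ : ℂ => ‖ζ‖⁻¹ + ‖ζ‖)
    (locInt_inv.add continuous_norm.locallyIntegrable) ?_ ?_
  · exact (Real.measurable_log.comp measurable_norm).aestronglyMeasurable
  · refine Eventually.of_forall fun x => ?_
    have := abs_log_le ‖x‖ (norm_nonneg x)
    rw [Real.norm_eq_abs]
    exact this.trans (le_abs_self _)

lemma int_log_mul {H : ℂ → ℝ} (hH : Continuous H) (hc : HasCompactSupport H) :
    Integrable (fun ζ => Real.log ‖ζ‖ * H ζ) := by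
  simpa [mul_comm] using locInt_log.integrable_smul_left_of_hasCompactSupport hH hc

lemma int_re_mul {H : ℂ → ℝ} (hH : Continuous H) (hc : HasCompactSupport H) :
    Integrable (fun ζ : ℂ => ζ.re / ‖ζ‖ ^ 2 * H ζ) := by
  refine Integrable.mono (locInt_inv.integrable_smul_left_of_hasCompactSupport hH hc) ?_ ?_
  · exact ((Complex.measurable_re.div (measurable_norm.pow_const 2)).mul
      hH.measurable).aestronglyMeasurable
  · refine Eventually.of_forall fun x => ?_
    simp only [norm_mul, norm_div, norm_pow, norm_norm, smul_eq_mul, norm_inv]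
    rw [mul_comm]
    gcongr
    rcases eq_or_ne x 0 with rfl | h
    · simp
    have : 0 < ‖x‖ := norm_pos_iff.2 h
    rw [div_le_iff₀ (by positivity)]
    have h2 : ‖x‖⁻¹ * ‖x‖ ^ 2 = ‖x‖ := by field_simp
    rw [h2]
    exact Complex.abs_re_le_norm x

lemma hasDerivAt_log (x y : ℝ) (hy : y ≠ 0) :
    HasDerivAt (fun x : ℝ => Real.log ‖(⟨x, y⟩ : ℂ)‖) (x / ‖(⟨x, y⟩ : ℂ)‖ ^ 2) x := by
  have e : (fun x : ℝ => Real.log ‖(⟨x, y⟩ : ℂ)‖) = fun x => Real.log (x * x + y * y) / 2 := by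
    ext x
    rw [Complex.norm_def, Complex.normSq_mk, Real.log_sqrt (by nlinarith [sq_nonneg x, sq_nonneg y])]
  have hp : x * x + y * y ≠ 0 := by
    have := mul_self_pos.2 hy
    nlinarith [mul_self_nonneg x]
  rw [e, Complex.sq_norm, Complex.normSq_mk]
  have h1 : HasDerivAt (fun x : ℝ => x * x + y * y) (1 * x + x * 1) x :=
    ((hasDerivAt_id' x).mul (hasDerivAt_id' x)).add_const _
  convert! (h1.log hp).div_const 2 using 1
  field_simp
  ring

lemma mk_isClosedEmbedding (y : ℝ) : IsClosedEmbedding (fun x : ℝ => (⟨x, y⟩ : ℂ)) := by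
  refine Isometry.isClosedEmbedding (Isometry.of_dist_eq fun a b => ?_)
  exact Complex.dist_of_im_eq rfl

lemma ibp_line {H : ℂ → ℝ} (hH : ContDiff ℝ 1 H) (hc : HasCompactSupport H) (y : ℝ) (hy : y ≠ 0) :
    ∫ x : ℝ, Real.log ‖(⟨x, y⟩ : ℂ)‖ * fderiv ℝ H ⟨x, y⟩ 1 =
      ∫ x : ℝ, -((⟨x, y⟩ : ℂ).re / ‖(⟨x, y⟩ : ℂ)‖ ^ 2 * H ⟨x, y⟩) := by
  have hcm := (mk_isClosedEmbedding y).continuous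
  have hne : ∀ x : ℝ, (⟨x, y⟩ : ℂ) ≠ 0 := fun x h => hy (congrArg Complex.im h)
  have hne' : ∀ x : ℝ, ‖(⟨x, y⟩ : ℂ)‖ ≠ 0 := fun x => norm_ne_zero_iff.2 (hne x)
  have hlog : Continuous fun x : ℝ => Real.log ‖(⟨x, y⟩ : ℂ)‖ := hcm.norm.log hne'
  have hq : Continuous fun x : ℝ => x / ‖(⟨x, y⟩ : ℂ)‖ ^ 2 :=
    continuous_id.div (hcm.norm.pow 2) fun x => pow_ne_zero _ (hne' x)
  have hcv : HasCompactSupport fun x : ℝ => H ⟨x, y⟩ := hc.comp_isClosedEmbedding (mk_isClosedEmbedding y)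
  have hd : Continuous fun w => fderiv ℝ H w 1 := (hH.continuous_fderiv one_ne_zero).clm_apply continuous_const
  have hdc : HasCompactSupport fun w => fderiv ℝ H w 1 := hc.fderiv_apply ℝ 1
  have hcv' : HasCompactSupport fun x : ℝ => fderiv ℝ H ⟨x, y⟩ 1 :=
    hdc.comp_isClosedEmbedding (mk_isClosedEmbedding y)
  refine Eq.trans ?_ (integral_neg _).symm
  refine integral_mul_deriv_eq_deriv_mul_of_integrable
    (u := fun x : ℝ => Real.log ‖(⟨x, y⟩ : ℂ)‖) (v := fun x : ℝ => H ⟨x, y⟩)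
    (u' := fun x : ℝ => x / ‖(⟨x, y⟩ : ℂ)‖ ^ 2) (v' := fun x : ℝ => fderiv ℝ H ⟨x, y⟩ 1)
    (fun x _ => hasDerivAt_log x y hy) ?_ ?_ ?_ ?_
  · intro x _
    have h1 : HasDerivAt (fun x : ℝ => (⟨x, y⟩ : ℂ)) 1 x := by
      have : (fun x : ℝ => (⟨x, y⟩ : ℂ)) = fun x : ℝ => (x : ℂ) + (⟨0, y⟩ : ℂ) := by
        funext x
        apply Complex.ext <;> simp
      rw [this]
      exact (Complex.ofRealCLM.hasDerivAt (x := x)).add_const _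
    exact ((hH.differentiable one_ne_zero _).hasFDerivAt).comp_hasDerivAt x h1
  · exact (hlog.mul (hd.comp hcm)).integrable_of_hasCompactSupport hcv'.mul_left
  · exact (hq.mul (hH.continuous.comp hcm)).integrable_of_hasCompactSupport hcv.mul_left
  · exact (hlog.mul (hH.continuous.comp hcm)).integrable_of_hasCompactSupport hcv.mul_left

lemma integral_slices {g : ℂ → ℝ} (hg : Integrable g) :
    ∫ ζ, g ζ = ∫ y : ℝ, ∫ x : ℝ, g ⟨x, y⟩ := by
  have hm := Complex.volume_preserving_equiv_real_prod.symm
  rw [← hm.integral_comp Complex.measurableEquivRealProd.symm.measurableEmbedding]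
  have hi := (hm.integrable_comp_emb Complex.measurableEquivRealProd.symm.measurableEmbedding).2 hg
  exact integral_prod_symm _ hi

lemma ibp_one {H : ℂ → ℝ} (hH : ContDiff ℝ 1 H) (hc : HasCompactSupport H) :
    ∫ ζ : ℂ, Real.log ‖ζ‖ * fderiv ℝ H ζ 1 = - ∫ ζ : ℂ, ζ.re / ‖ζ‖ ^ 2 * H ζ := by
  have hd : Continuous fun w => fderiv ℝ H w 1 := (hH.continuous_fderiv one_ne_zero).clm_apply continuous_const
  have hdc : HasCompactSupport fun w => fderiv ℝ H w 1 := hc.fderiv_apply ℝ 1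
  have h2 : ∫ ζ : ℂ, -(ζ.re / ‖ζ‖ ^ 2 * H ζ) = _ :=
    integral_slices (int_re_mul hH.continuous hc).neg
  rw [← integral_neg, integral_slices (int_log_mul hd hdc), h2]
  refine integral_congr_ae ?_
  have : ∀ᵐ y : ℝ, y ≠ 0 := by simp [ae_iff]
  filter_upwards [this] with y hy
  exact ibp_line hH hc y hy

lemma rot_mp : MeasurePreserving (fun ζ : ℂ => Complex.I * ζ) := by
  have hI : Complex.I ∈ Submonoid.unitSphere ℂ := by simp [Submonoid.unitSphere]
  have h := (rotation ⟨Complex.I, hI⟩).measurePreserving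
  have e : ⇑(rotation ⟨Complex.I, hI⟩) = fun ζ : ℂ => Complex.I * ζ :=
    funext fun ζ => rotation_apply _ ζ
  rwa [e] at h

lemma rot_emb : MeasurableEmbedding (fun ζ : ℂ => Complex.I * ζ) :=
  (Homeomorph.mulLeft₀ Complex.I Complex.I_ne_zero).measurableEmbedding

lemma integral_rot (g : ℂ → ℝ) : ∫ ζ, g (Complex.I * ζ) = ∫ ζ, g ζ :=
  rot_mp.integral_comp rot_emb g

lemma ibp_I {H : ℂ → ℝ} (hH : ContDiff ℝ 1 H) (hc : HasCompactSupport H) :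
    ∫ ζ : ℂ, Real.log ‖ζ‖ * fderiv ℝ H ζ Complex.I = - ∫ ζ : ℂ, ζ.im / ‖ζ‖ ^ 2 * H ζ := by
  have hK : ContDiff ℝ 1 fun w => H (Complex.I * w) := hH.comp (contDiff_const.mul contDiff_id)
  have hKc : HasCompactSupport fun w => H (Complex.I * w) :=
    hc.comp_homeomorph (Homeomorph.mulLeft₀ Complex.I Complex.I_ne_zero)
  have := ibp_one hK hKc
  rw [← integral_rot, ← integral_rot (fun ζ => ζ.im / ‖ζ‖ ^ 2 * H ζ)]
  convert this using 2
  · ext ζ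
    have h1 : HasFDerivAt (fun w : ℂ => Complex.I * w) (ContinuousLinearMap.mul ℝ ℂ Complex.I) ζ :=
      (ContinuousLinearMap.mul ℝ ℂ Complex.I).hasFDerivAt
    have h2 := ((hH.differentiable one_ne_zero (Complex.I * ζ)).hasFDerivAt).comp ζ h1
    have h3 : fderiv ℝ (fun w => H (Complex.I * w)) ζ = _ := h2.fderiv
    rw [h3]
    simp
  · simp

lemma polar_part {G : ℂ → ℝ} (hG : ContDiff ℝ 1 G) (hc : HasCompactSupport G) :
    ∫ ζ : ℂ, (‖ζ‖ ^ 2)⁻¹ * fderiv ℝ G ζ ζ = - (2 * Real.pi * G 0) := by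
  rw [← Complex.integral_comp_polarCoord_symm, polarCoord_target]
  have hcont : Continuous fun p : ℝ × ℝ => fderiv ℝ G (p.1 * Complex.exp (p.2 * Complex.I))
      (Complex.exp (p.2 * Complex.I)) :=
    ((hG.continuous_fderiv one_ne_zero).comp (by fun_prop)).clm_apply (by fun_prop)
  have e : ∀ p ∈ Ioi (0 : ℝ) ×ˢ Ioo (-Real.pi) Real.pi,
      p.1 • ((‖Complex.polarCoord.symm p‖ ^ 2)⁻¹ *
        fderiv ℝ G (Complex.polarCoord.symm p) (Complex.polarCoord.symm p)) =
      fderiv ℝ G (p.1 * Complex.exp (p.2 * Complex.I)) (Complex.exp (p.2 * Complex.I)) := by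
    rintro ⟨r, θ⟩ ⟨hr, -⟩
    have hr : 0 < r := hr
    have h1 : Complex.polarCoord.symm (r, θ) = r * Complex.exp (θ * Complex.I) := by
      rw [Complex.polarCoord_symm_apply, Complex.exp_mul_I]
      simp
    have h2 : (r : ℂ) * Complex.exp (θ * Complex.I) = r • Complex.exp (θ * Complex.I) := by simp
    rw [h1]
    simp only [norm_mul, Complex.norm_exp_ofReal_mul_I, Complex.norm_real, mul_one]
    conv_lhs => rw [h2, map_smul]
    simp only [smul_eq_mul, Real.norm_eq_abs, sq_abs, ← h2]
    field_simp
  rw [setIntegral_congr_fun (measurableSet_Ioi.prod measurableSet_Ioo) e]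
  obtain ⟨ρ, hρ0, hρ⟩ := hc.isCompact.isBounded.exists_pos_norm_lt
  have hz : ∀ p : ℝ × ℝ, ρ < p.1 → fderiv ℝ G (p.1 * Complex.exp (p.2 * Complex.I)) = 0 := by
    intro p hp
    by_contra h
    have := hρ _ (support_fderiv_subset ℝ (f := G) h)
    rw [norm_mul, Complex.norm_exp_ofReal_mul_I, Complex.norm_real, mul_one] at this
    exact absurd (le_abs_self p.1) (not_le.2 (this.trans hp))
  have hintg : IntegrableOn (fun p : ℝ × ℝ => fderiv ℝ G (p.1 * Complex.exp (p.2 * Complex.I))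
      (Complex.exp (p.2 * Complex.I))) (Ioi (0 : ℝ) ×ˢ Ioo (-Real.pi) Real.pi)
      (volume.prod volume) := by
    have h1 := hcont.continuousOn.integrableOn_compact (μ := volume)
      ((isCompact_Icc (a := (0:ℝ)) (b := ρ)).prod (isCompact_Icc (a := -Real.pi) (b := Real.pi)))
    refine h1.of_forall_sdiff_eq_zero (measurableSet_Ioi.prod measurableSet_Ioo) ?_
    rintro ⟨r, θ⟩ ⟨⟨hr, hθ⟩, h⟩
    have : ρ < r := by
      by_contra h'
      exact h ⟨⟨le_of_lt hr, not_lt.1 h'⟩, Ioo_subset_Icc_self hθ⟩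
    simp [hz (r, θ) this]
  rw [Measure.volume_eq_prod, ← Measure.prod_restrict, integral_prod_symm _ (by rwa [Measure.prod_restrict])]
  have inner : ∀ θ : ℝ, ∫ r in Ioi (0:ℝ), fderiv ℝ G (r * Complex.exp (θ * Complex.I))
      (Complex.exp (θ * Complex.I)) = - G 0 := by
    intro θ
    have hcd : ContDiff ℝ 1 fun r : ℝ => G (r * Complex.exp (θ * Complex.I)) :=
      hG.comp (Complex.ofRealCLM.contDiff.mul contDiff_const)
    have hemb : IsClosedEmbedding fun r : ℝ => (r : ℂ) * Complex.exp (θ * Complex.I) := by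
      refine Isometry.isClosedEmbedding (Isometry.of_dist_eq fun a b => ?_)
      rw [dist_eq_norm, ← sub_mul, norm_mul, Complex.norm_exp_ofReal_mul_I, ← Complex.ofReal_sub,
        Complex.norm_real, mul_one, dist_eq_norm]
    have := HasCompactSupport.integral_Ioi_deriv_eq hcd (hc.comp_isClosedEmbedding hemb) 0
    simp only [Complex.ofReal_zero, zero_mul] at this
    rw [← this]
    congr 1
    ext r
    have h1 : HasDerivAt (fun r : ℝ => (r : ℂ) * Complex.exp (θ * Complex.I))
        (1 * Complex.exp (θ * Complex.I)) r :=
      (Complex.ofRealCLM.hasDerivAt (x := r)).mul_const _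
    rw [one_mul] at h1
    exact (((hG.differentiable one_ne_zero _).hasFDerivAt).comp_hasDerivAt r h1).deriv.symm
  simp only [inner]
  simp [Real.pi_pos.le]
  left
  ring

lemma fund_zero {G : ℂ → ℝ} (hG : ContDiff ℝ 2 G) (hc : HasCompactSupport G) :
    ∫ ζ : ℂ, Real.log ‖ζ‖ * laplacian G ζ = 2 * Real.pi * G 0 := by
  have hd : ∀ v, ContDiff ℝ 1 fun w => fderiv ℝ G w v := fun v =>
    (hG.fderiv_right (m := 1) (by norm_num)).clm_apply contDiff_const
  have hdc : ∀ v, HasCompactSupport fun w => fderiv ℝ G w v := fun v => hc.fderiv_apply ℝ v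
  have hdd : ∀ v, Continuous fun w => fderiv ℝ (fun w => fderiv ℝ G w v) w v := fun v =>
    ((hd v).continuous_fderiv one_ne_zero).clm_apply continuous_const
  have hddc : ∀ v, HasCompactSupport fun w => fderiv ℝ (fun w => fderiv ℝ G w v) w v := fun v =>
    (hdc v).fderiv_apply ℝ v
  have him : Integrable fun ζ : ℂ => ζ.im / ‖ζ‖ ^ 2 * fderiv ℝ G ζ Complex.I := by
    have hr : Integrable fun ζ : ℂ => ζ.re / ‖ζ‖ ^ 2 * fderiv ℝ G (Complex.I * ζ) Complex.I :=
      int_re_mul (H := fun w => fderiv ℝ G (Complex.I * w) Complex.I)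
        ((hd _).continuous.comp (continuous_const.mul continuous_id))
        ((hdc _).comp_homeomorph (Homeomorph.mulLeft₀ Complex.I Complex.I_ne_zero))
    refine (rot_mp.integrable_comp_emb rot_emb).1 (hr.congr (Eventually.of_forall fun ζ => ?_))
    simp
  simp only [laplacian, mul_add]
  rw [integral_add (int_log_mul (hdd _) (hddc _)) (int_log_mul (hdd _) (hddc _)),
    ibp_one (hd _) (hdc _), ibp_I (hd _) (hdc _), ← neg_add,
    ← integral_add (int_re_mul (hd _).continuous (hdc _)) him]
  have := polar_part (hG.of_le (by norm_num)) hc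
  rw [neg_eq_iff_eq_neg, ← this]
  congr 1
  ext ζ
  have h : ζ = ζ.re • (1 : ℂ) + ζ.im • Complex.I := by
    simp
  have h2 : fderiv ℝ G ζ ζ = ζ.re * fderiv ℝ G ζ 1 + ζ.im * fderiv ℝ G ζ Complex.I := by
    conv_lhs => rw [show fderiv ℝ G ζ ζ = fderiv ℝ G ζ (ζ.re • (1 : ℂ) + ζ.im • Complex.I) by rw [← h]]
    simp only [map_add, map_smul, smul_eq_mul]
  rw [h2]
  ring

lemma laplacian_translate (F : ℂ → ℝ) (w ζ : ℂ) :
    laplacian (fun x => F (w + x)) ζ = laplacian F (w + ζ) := by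
  simp only [laplacian, fderiv_comp_add_left]
  rw [fderiv_comp_add_left (f := fun x => fderiv ℝ F x 1),
    fderiv_comp_add_left (f := fun x => fderiv ℝ F x Complex.I)]

lemma fund {F : ℂ → ℝ} (hF : ContDiff ℝ 2 F) (hc : HasCompactSupport F) (w : ℂ) :
    ∫ ζ : ℂ, Real.log ‖w - ζ‖ * laplacian F ζ = 2 * Real.pi * F w := by
  have := fund_zero (G := fun x => F (w + x)) (hF.comp (contDiff_const.add contDiff_id))
    (hc.comp_homeomorph (Homeomorph.addLeft w))
  rw [add_zero] at this
  rw [← this, ← integral_add_left_eq_self _ w]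
  simp [laplacian_translate]

lemma continuous_laplacian {F : ℂ → ℝ} (hF : ContDiff ℝ 2 F) : Continuous (laplacian F) := by
  have hd : ∀ v, ContDiff ℝ 1 fun w => fderiv ℝ F w v := fun v =>
    (hF.fderiv_right (m := 1) (by norm_num)).clm_apply contDiff_const
  have hdd : ∀ v, Continuous fun w => fderiv ℝ (fun w => fderiv ℝ F w v) w v := fun v =>
    ((hd v).continuous_fderiv one_ne_zero).clm_apply continuous_const
  exact (hdd 1).add (hdd Complex.I)

lemma compact_laplacian {F : ℂ → ℝ} (hc : HasCompactSupport F) :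
    HasCompactSupport (laplacian F) :=
  ((hc.fderiv_apply ℝ 1).fderiv_apply ℝ 1).add
    ((hc.fderiv_apply ℝ Complex.I).fderiv_apply ℝ Complex.I)

lemma laplacian_congr {f g : ℂ → ℝ} {x : ℂ} (h : f =ᶠ[𝓝 x] g) :
    laplacian f x = laplacian g x := by
  have h1 : ∀ v, (fun w => fderiv ℝ f w v) =ᶠ[𝓝 x] fun w => fderiv ℝ g w v := fun v =>
    (h.fderiv (𝕜 := ℝ)).mono fun w hw => by simp only [hw]
  simp only [laplacian, (h1 _).fderiv_eq]

/-- The Poisson kernel of the statement. -/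
noncomputable def PK (R : ℝ) (z : ℂ) (θ : ℝ) : ℝ :=
  (R ^ 2 - ‖z‖ ^ 2) / ‖z - (R : ℂ) * Complex.exp (θ * Complex.I)‖ ^ 2

lemma poisson_harm {R : ℝ} (hR : 0 < R) {z : ℂ} (hz : ‖z‖ < R) {h : ℂ → ℝ}
    (hh : InnerProductSpace.HarmonicOnNhd h (Metric.closedBall 0 R)) :
    ∫ θ in (0 : ℝ)..(2 * Real.pi), PK R z θ * h ((R : ℂ) * Complex.exp (θ * Complex.I)) =
      2 * Real.pi * h z := by
  have := hh.circleAverage_poissonKernel_smul (w := z) (by simpa using hz)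
  rw [Real.circleAverage_def, smul_eq_mul, inv_mul_eq_iff_eq_mul₀ (by positivity)] at this
  rw [← this]
  congr 1
  ext θ
  simp [PK, poissonKernel, circleMap, norm_sub_rev z, abs_of_pos hR]

lemma circ_ne {R : ℝ} (hR : 0 < R) {z : ℂ} (hz : ‖z‖ ≠ R) (θ : ℝ) :
    z - (R : ℂ) * Complex.exp (θ * Complex.I) ≠ 0 := by
  intro h
  apply hz
  rw [sub_eq_zero.1 h]
  simp [abs_of_pos hR]

lemma continuous_PK {R : ℝ} (hR : 0 < R) {z : ℂ} (hz : ‖z‖ < R) : Continuous (PK R z) := by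
  unfold PK
  refine continuous_const.div (by fun_prop) fun θ => ?_
  exact pow_ne_zero _ (norm_ne_zero_iff.2 (circ_ne hR hz.ne θ))

lemma poisson_out {R : ℝ} (hR : 0 < R) {z : ℂ} (hz : ‖z‖ < R) {ζ : ℂ} (hζ : R < ‖ζ‖) :
    ∫ θ in (0 : ℝ)..(2 * Real.pi), PK R z θ *
        Real.log ‖(R : ℂ) * Complex.exp (θ * Complex.I) - ζ‖ =
      2 * Real.pi * Real.log ‖z - ζ‖ := by
  refine poisson_harm hR hz (h := fun w => Real.log ‖w - ζ‖) fun w hw => ?_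
  refine AnalyticAt.harmonicAt_log_norm (f := fun w => w - ζ) (by fun_prop) ?_
  intro h
  rw [sub_eq_zero.1 h] at hw
  simp at hw
  linarith

lemma mul_conj_lt {R : ℝ} (hR : 0 < R) {w ζ : ℂ} (hw : ‖w‖ ≤ R) (hζ : ‖ζ‖ < R) :
    (R : ℂ) ^ 2 - w * (starRingEnd ℂ) ζ ≠ 0 := by
  intro h
  have : ‖(R : ℂ) ^ 2‖ = ‖w‖ * ‖ζ‖ := by
    rw [sub_eq_zero.1 h]; simp
  simp at this
  nlinarith [norm_nonneg w, norm_nonneg ζ]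

lemma norm_circ {R : ℝ} (hR : 0 < R) (ζ : ℂ) (θ : ℝ) :
    ‖(R : ℂ) ^ 2 - ((R : ℂ) * Complex.exp (θ * Complex.I)) * (starRingEnd ℂ) ζ‖ =
      R * ‖(R : ℂ) * Complex.exp (θ * Complex.I) - ζ‖ := by
  set e := Complex.exp (θ * Complex.I) with he
  have h1 : e * (starRingEnd ℂ) e = 1 := by
    rw [Complex.mul_conj, Complex.normSq_eq_norm_sq, he, Complex.norm_exp_ofReal_mul_I]; simp
  have h2 : (R : ℂ) ^ 2 - (R * e) * (starRingEnd ℂ) ζ =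
      R * e * (starRingEnd ℂ) (R * e - ζ) := by
    simp only [map_sub, map_mul, Complex.conj_ofReal]
    linear_combination (-(R : ℂ) ^ 2) * h1
  rw [h2, norm_mul, norm_mul, Complex.norm_conj, he, Complex.norm_exp_ofReal_mul_I]
  simp [abs_of_pos hR]

lemma poisson_in {R : ℝ} (hR : 0 < R) {z : ℂ} (hz : ‖z‖ < R) {ζ : ℂ} (hζ : ‖ζ‖ < R) :
    ∫ θ in (0 : ℝ)..(2 * Real.pi), PK R z θ *
        Real.log ‖(R : ℂ) * Complex.exp (θ * Complex.I) - ζ‖ =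
      2 * Real.pi * (Real.log ‖(R : ℂ) ^ 2 - z * (starRingEnd ℂ) ζ‖ - Real.log R) := by
  rw [← poisson_harm hR hz
    (h := fun w => Real.log ‖(R : ℂ) ^ 2 - w * (starRingEnd ℂ) ζ‖ - Real.log R)]
  · congr 1
    ext θ
    have : ‖(R : ℂ) * Complex.exp (θ * Complex.I) - ζ‖ ≠ 0 := by
      rw [norm_sub_rev]
      exact norm_ne_zero_iff.2 (circ_ne hR hζ.ne θ)
    rw [norm_circ hR, Real.log_mul hR.ne' this]
    ring
  · intro w hw
    refine InnerProductSpace.HarmonicAt.sub ?_ (InnerProductSpace.harmonicAt_const _)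
    exact AnalyticAt.harmonicAt_log_norm (f := fun w => (R : ℂ) ^ 2 - w * (starRingEnd ℂ) ζ)
      (by fun_prop) (mul_conj_lt hR (by simpa using hw) hζ)

lemma bound_log {L : ℂ → ℝ} (hL : Continuous L) (hc : HasCompactSupport L) (R : ℝ) :
    ∃ C : ℝ, ∀ w : ℂ, ‖w‖ ≤ R → ∫ ζ, ‖Real.log ‖w - ζ‖ * L ζ‖ ≤ C := by
  obtain ⟨ρ, hρ0, hρ⟩ := hc.isCompact.isBounded.exists_pos_norm_lt
  obtain ⟨M, hM⟩ := hL.bounded_above_of_compact_support hc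
  have hM0 : 0 ≤ M := (norm_nonneg _).trans (hM 0)
  have hI : IntegrableOn (fun ζ : ℂ => Real.log ‖ζ‖) (Metric.closedBall 0 (R + ρ)) :=
    locInt_log.integrableOn_isCompact (isCompact_closedBall _ _)
  refine ⟨∫ ζ, (Metric.closedBall (0 : ℂ) (R + ρ)).indicator
    (fun ζ => ‖Real.log ‖ζ‖‖ * M) ζ, fun w hw => ?_⟩
  rw [← integral_sub_left_eq_self _ volume w]
  refine integral_mono_of_nonneg (Eventually.of_forall fun ζ => norm_nonneg _) ?_
    (Eventually.of_forall fun ζ => ?_)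
  · rw [integrable_indicator_iff measurableSet_closedBall]
    exact hI.norm.mul_const M
  · simp only [sub_sub_cancel, norm_mul]
    by_cases h : ζ ∈ Metric.closedBall (0 : ℂ) (R + ρ)
    · rw [indicator_of_mem h]
      gcongr
      exact hM _
    · rw [indicator_of_notMem h]
      have : L (w - ζ) = 0 := by
        by_contra h'
        have h1 := hρ _ (subset_tsupport _ h')
        apply h
        rw [mem_closedBall_zero_iff]
        have := norm_sub_norm_le ζ w
        rw [norm_sub_rev] at this
        linarith
      simp [this]

lemma int_log_sub_mul {L : ℂ → ℝ} (hL : Continuous L) (hc : HasCompactSupport L) (w : ℂ) :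
    Integrable fun ζ => Real.log ‖w - ζ‖ * L ζ := by
  have := (int_log_mul (H := fun ζ => L (w - ζ)) (hL.comp (by fun_prop))
    (hc.comp_homeomorph (Homeomorph.subLeft w))).comp_sub_left w
  simpa using this

lemma fubini_int {R : ℝ} (hR : 0 < R) {z : ℂ} (hz : ‖z‖ < R) {L : ℂ → ℝ} (hL : Continuous L)
    (hc : HasCompactSupport L) :
    Integrable (Function.uncurry fun (θ : ℝ) (ζ : ℂ) => PK R z θ *
        (Real.log ‖(R : ℂ) * Complex.exp (θ * Complex.I) - ζ‖ * L ζ))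
      ((volume.restrict (uIoc 0 (2 * Real.pi))).prod volume) := by
  have hmeas : Measurable (Function.uncurry fun (θ : ℝ) (ζ : ℂ) => PK R z θ *
        (Real.log ‖(R : ℂ) * Complex.exp (θ * Complex.I) - ζ‖ * L ζ)) := by
    refine ((continuous_PK hR hz).measurable.comp measurable_fst).mul
      (Measurable.mul (Real.measurable_log.comp ?_) (hL.measurable.comp measurable_snd))
    exact Continuous.measurable (by fun_prop)
  obtain ⟨C, hC⟩ := bound_log hL hc R
  rw [integrable_prod_iff hmeas.aestronglyMeasurable]
  refine ⟨Eventually.of_forall fun θ => (int_log_sub_mul hL hc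
    ((R : ℂ) * Complex.exp (θ * Complex.I))).const_mul (PK R z θ), ?_⟩
  have hb : Integrable (fun θ => ‖PK R z θ‖ * C) (volume.restrict (uIoc 0 (2 * Real.pi))) := by
    have : IntervalIntegrable (fun θ => ‖PK R z θ‖ * C) volume 0 (2 * Real.pi) :=
      Continuous.intervalIntegrable ((continuous_PK hR hz).norm.mul continuous_const) _ _
    exact intervalIntegrable_iff.1 this
  refine hb.mono' hmeas.aestronglyMeasurable.norm.integral_prod_right'
    (Eventually.of_forall fun θ => ?_)
  simp only [Function.uncurry_apply_pair]
  rw [Real.norm_of_nonneg (integral_nonneg fun _ => norm_nonneg _)]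
  simp only [norm_mul (PK R z θ)]
  rw [integral_const_mul]
  gcongr
  exact hC _ (by simp [abs_of_pos hR])

lemma main {R : ℝ} (hR : 0 < R) {z : ℂ} (hz : ‖z‖ < R) {F : ℂ → ℝ} (hF : ContDiff ℝ 2 F)
    (hc : HasCompactSupport F) :
    F z = (1 / (2 * Real.pi)) * (∫ ζ in Metric.ball (0 : ℂ) R,
          Real.log (‖(R : ℂ) * z - (R : ℂ) * ζ‖ /
              ‖(R : ℂ) ^ 2 - z * (starRingEnd ℂ) ζ‖) * laplacian F ζ) +
      (1 / (2 * Real.pi)) * ∫ θ in (0 : ℝ)..(2 * Real.pi), PK R z θ *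
            F ((R : ℂ) * Complex.exp (θ * Complex.I)) := by
  have hL := continuous_laplacian hF
  have hLc := compact_laplacian hc
  have hfub := fubini_int hR hz hL hLc
  have hpi : 2 * Real.pi ≠ 0 := by positivity
  have e1 : ∫ θ in (0 : ℝ)..(2 * Real.pi), PK R z θ *
            F ((R : ℂ) * Complex.exp (θ * Complex.I)) =
      (1 / (2 * Real.pi)) * ∫ ζ : ℂ, ∫ θ in (0 : ℝ)..(2 * Real.pi), PK R z θ *
        (Real.log ‖(R : ℂ) * Complex.exp (θ * Complex.I) - ζ‖ * laplacian F ζ) := by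
    rw [← intervalIntegral_integral_swap hfub, ← intervalIntegral.integral_const_mul]
    congr 1
    ext θ
    rw [integral_const_mul, fund hF hc]
    field_simp
  have hJ : Integrable fun ζ : ℂ => ∫ θ in (0 : ℝ)..(2 * Real.pi), PK R z θ *
        (Real.log ‖(R : ℂ) * Complex.exp (θ * Complex.I) - ζ‖ * laplacian F ζ) := by
    have := hfub.integral_prod_right
    rw [uIoc_of_le (by positivity)] at this
    simp only [intervalIntegral.integral_of_le (show (0:ℝ) ≤ 2 * Real.pi by positivity)]
    exact this
  have e2 : ∀ᵐ ζ : ℂ, 2 * Real.pi * (Real.log ‖z - ζ‖ * laplacian F ζ) -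
      (∫ θ in (0 : ℝ)..(2 * Real.pi), PK R z θ *
        (Real.log ‖(R : ℂ) * Complex.exp (θ * Complex.I) - ζ‖ * laplacian F ζ)) =
      2 * Real.pi * (Metric.ball (0 : ℂ) R).indicator (fun ζ => Real.log (‖(R : ℂ) * z - (R : ℂ) * ζ‖ /
              ‖(R : ℂ) ^ 2 - z * (starRingEnd ℂ) ζ‖) * laplacian F ζ) ζ := by
    have a1 : ∀ᵐ ζ : ℂ, ζ ∉ Metric.sphere (0 : ℂ) R :=
      measure_eq_zero_iff_ae_notMem.1 (Measure.addHaar_sphere _ _ _)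
    have a2 : ∀ᵐ ζ : ℂ, ζ ≠ z := by simp [ae_iff]
    filter_upwards [a1, a2] with ζ h1 h2
    simp only [← mul_assoc, intervalIntegral.integral_mul_const]
    have h1' : ‖ζ‖ ≠ R := by simpa using h1
    rcases lt_or_gt_of_ne h1' with h | h
    · rw [poisson_in hR hz h, indicator_of_mem (by simpa using h), ← mul_sub, norm_mul,
        Real.log_div, Real.log_mul]
      · simp [abs_of_pos hR]; ring
      · simpa using hR.ne'
      · exact norm_ne_zero_iff.2 (sub_ne_zero.2 h2.symm)
      · simpa [sub_eq_zero, eq_comm (a := z)] using ⟨hR.ne', h2⟩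
      · exact norm_ne_zero_iff.2 (mul_conj_lt hR hz.le h)
    · rw [poisson_out hR hz h, indicator_of_notMem (by simpa using h.le)]
      ring
  have e3 := integral_congr_ae e2
  rw [integral_sub ((int_log_sub_mul hL hLc z).const_mul _) hJ, integral_const_mul,
    integral_const_mul, integral_indicator Metric.isOpen_ball.measurableSet, fund hF hc] at e3
  rw [e1]
  have alg : ∀ A B f p : ℝ, p ≠ 0 → p * (p * f) - B = p * A →
      f = 1 / p * A + 1 / p * (1 / p * B) := by
    intro A B f p hp h
    field_simp
    linarith
  exact alg _ _ _ _ hpi e3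

lemma cutoff {R : ℝ} (hR : 0 < R) {f : ℂ → ℝ} {U : Set ℂ} (hU : IsOpen U)
    (hUR : Metric.closedBall (0 : ℂ) R ⊆ U) (hf : ContDiffOn ℝ 2 f U) :
    ∃ F : ℂ → ℝ, ContDiff ℝ 2 F ∧ HasCompactSupport F ∧
      ∀ x ∈ Metric.closedBall (0 : ℂ) R, F x = f x := by
  obtain ⟨δ, hδ, hsub⟩ := (isCompact_closedBall (0 : ℂ) R).exists_cthickening_subset_open hU hUR
  rw [cthickening_closedBall hδ.le hR.le] at hsub
  let χ : ContDiffBump (0 : ℂ) := ⟨R, δ + R, hR, by linarith⟩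
  refine ⟨fun x => χ x * f x, ?_, χ.hasCompactSupport.mul_right, fun x hx => ?_⟩
  · rw [contDiff_iff_contDiffAt]
    intro x
    by_cases hx : x ∈ U
    · exact χ.contDiff.contDiffAt.mul (hf.contDiffAt (hU.mem_nhds hx))
    · have : x ∉ tsupport χ := by
        rw [χ.tsupport_eq]
        exact fun h => hx (hsub h)
      have h0 := notMem_tsupport_iff_eventuallyEq.1 this
      refine (contDiffAt_const (c := (0:ℝ))).congr_of_eventuallyEq (h0.mono fun y hy => ?_)
      simp [hy]
  · simp only [χ.one_of_mem_closedBall hx, one_mul]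

end RieszAux

/-- Riesz (Poisson) representation formula on the disk of radius `R`:
if `f` is `C²` on an open neighborhood `U` of the closed disk of radius `R`, then for `|z| < R`,
`f(z) = (1/2π) ∫_{B_R(0)} log(|Rz − Rζ|/|R² − z ζ̄|) Δf(ζ) dA(ζ)
      + (1/2π) ∫_0^{2π} ((R² − |z|²)/|z − R e^{iθ}|²) f(R e^{iθ}) dθ`. -/
theorem stmt_2 (R : ℝ) (hR : 0 < R) (f : ℂ → ℝ) (U : Set ℂ) (hU : IsOpen U)
    (hUR : Metric.closedBall (0 : ℂ) R ⊆ U) (hf : ContDiffOn ℝ 2 f U)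
    (z : ℂ) (hz : ‖z‖ < R) :
    f z =
      (1 / (2 * Real.pi)) *
        (∫ ζ in Metric.ball (0 : ℂ) R,
          Real.log (‖(R : ℂ) * z - (R : ℂ) * ζ‖ /
              ‖(R : ℂ) ^ 2 - z * (starRingEnd ℂ) ζ‖) * laplacian f ζ) +
      (1 / (2 * Real.pi)) *
        ∫ θ in (0 : ℝ)..(2 * Real.pi),
          ((R ^ 2 - ‖z‖ ^ 2) /
              ‖z - (R : ℂ) * Complex.exp (θ * Complex.I)‖ ^ 2) *
            f ((R : ℂ) * Complex.exp (θ * Complex.I)) := by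

  obtain ⟨F, hF, hc, hFf⟩ := RieszAux.cutoff hR hU hUR hf
  have h := RieszAux.main hR hz hF hc
  rw [hFf z (by simpa using hz.le)] at h
  rw [h]
  congr 2
  · refine setIntegral_congr_fun Metric.isOpen_ball.measurableSet fun ζ hζ => ?_
    have : laplacian F ζ = laplacian f ζ := by
      refine RieszAux.laplacian_congr ?_
      filter_upwards [Metric.isOpen_ball.mem_nhds hζ] with x hx
      exact hFf x (Metric.ball_subset_closedBall hx)
    simp only [this]
  · congr 1
    ext θ
    rw [hFf _ (by simp [abs_of_pos hR])]
    rfl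
end
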